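/- arXiv:2003.02714 — 5 statements merged into one kernel-verified Lean document; each statement's English description precedes it below -/
import Mathlib

section
/- Every normal PO-dilator has a Kruskal derivative. -/
universe u

/-- A bundled partial order. -/
structure POrd : Type (u + 1) where
  carrier : Type u
  [str : PartialOrder carrier]

instance : CoeSort POrd.{u} (Type u) := ⟨POrd.carrier⟩
attribute [instance] POrd.str

def POrd.of (X : Type u) [PartialOrder X] : POrd.{u} := ⟨X⟩

/-- A quasi embedding of partial orders. -/
def QuasiEmb {X Y : Type*} [PartialOrder X] [PartialOrder Y] (f : X → Y) : Prop :=
  ∀ x y : X, f x ≤ f y → x ≤ y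

/-- An embedding of partial orders. -/
def IsEmb {X Y : Type*} [PartialOrder X] [PartialOrder Y] (f : X → Y) : Prop :=
  ∀ x y : X, x ≤ y ↔ f x ≤ f y

theorem quasiEmb_id {X : Type*} [PartialOrder X] : QuasiEmb (id : X → X) :=
  fun _ _ h => h

theorem QuasiEmb.comp {X Y Z : Type*} [PartialOrder X] [PartialOrder Y] [PartialOrder Z]
    {f : X → Y} {g : Y → Z} (hf : QuasiEmb f) (hg : QuasiEmb g) :
    QuasiEmb (g ∘ f) := fun x y h => hf x y (hg _ _ h)

/-- `LeFin a b` is the relation `a ≤ᶠⁱⁿ b` on subsets of a partial order. -/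
def LeFin {X : Type*} [PartialOrder X] (a b : Set X) : Prop :=
  ∀ x ∈ a, ∃ y ∈ b, x ≤ y

/-- A PO-dilator: an embedding-preserving functor on partial orders with quasi embeddings,
together with a natural finite support. -/
structure PODilator : Type (u + 1) where
  obj : POrd.{u} → POrd.{u}
  map : {X Y : POrd.{u}} → (f : X → Y) → QuasiEmb f → (obj X → obj Y)
  supp : {X : POrd.{u}} → obj X → Set X
  map_quasiEmb : ∀ {X Y : POrd.{u}} (f : X → Y) (hf : QuasiEmb f), QuasiEmb (map f hf)
  map_id : ∀ (X : POrd.{u}), map (id : X → X) quasiEmb_id = id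
  map_comp : ∀ {X Y Z : POrd.{u}} (f : X → Y) (g : Y → Z) (hf : QuasiEmb f) (hg : QuasiEmb g),
      map (g ∘ f) (hf.comp hg) = map g hg ∘ map f hf
  map_emb : ∀ {X Y : POrd.{u}} (f : X → Y) (hf : QuasiEmb f), IsEmb f → IsEmb (map f hf)
  supp_finite : ∀ {X : POrd.{u}} (σ : obj X), (supp σ).Finite
  supp_natural : ∀ {X Y : POrd.{u}} (f : X → Y) (hf : QuasiEmb f) (σ : obj X),
      supp (map f hf σ) = f '' supp σ
  supp_cond : ∀ {X Y : POrd.{u}} (f : X → Y) (hf : QuasiEmb f), IsEmb f →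
      ∀ σ : obj Y, supp σ ⊆ Set.range f → σ ∈ Set.range (map f hf)

/-- Normality of a PO-dilator. -/
def PODilator.IsNormal (W : PODilator.{u}) : Prop :=
  ∀ (X : POrd.{u}) (σ τ : W.obj X), σ ≤ τ → LeFin (W.supp σ) (W.supp τ)

/-- Well partial orders. -/
def IsWpo (X : Type*) [PartialOrder X] : Prop :=
  ∀ f : ℕ → X, ∃ i j : ℕ, i < j ∧ f i ≤ f j

/-- A WPO-dilator preserves well partial orders. -/
def PODilator.IsWPO (W : PODilator.{u}) : Prop :=
  ∀ X : POrd.{u}, IsWpo X → IsWpo (W.obj X)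

/-- Kruskal fixed point of `W` over `X`. -/
structure IsKruskalFP (W : PODilator.{u}) (X Z : POrd.{u})
    (ι : X → Z) (κ : W.obj Z → Z) : Prop where
  range_disjoint : Set.range ι ∩ Set.range κ = ∅
  iota_le : ∀ x y : X, ι x ≤ ι y → x ≤ y
  iota_kappa : ∀ (x : X) (τ : W.obj Z), ι x ≤ κ τ ↔ ∃ z ∈ W.supp τ, ι x ≤ z
  kappa_iota : ∀ (σ : W.obj Z) (y : X), ¬ κ σ ≤ ι y
  kappa_kappa : ∀ σ τ : W.obj Z, κ σ ≤ κ τ ↔ (σ ≤ τ ∨ ∃ z ∈ W.supp τ, κ σ ≤ z)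

/-- Condition (i) of Theorem 3.5. -/
structure KFPCondI (W : PODilator.{u}) (X Z : POrd.{u})
    (ι : X → Z) (κ : W.obj Z → Z) : Prop where
  range_union : Set.range ι ∪ Set.range κ = Set.univ
  iota_mono : ∀ x y : X, x ≤ y → ι x ≤ ι y
  height : ∃ h : Z → ℕ, ∀ (s : Z) (σ : W.obj Z), s ∈ W.supp σ → h s < h (κ σ)

/-- Initial Kruskal fixed points. -/
def IsInitialKFP (W : PODilator.{u}) (X Z : POrd.{u})
    (ι : X → Z) (κ : W.obj Z → Z) : Prop :=
  IsKruskalFP W X Z ι κ ∧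
  ∀ (Z' : POrd.{u}) (ι' : X → Z') (κ' : W.obj Z' → Z'), IsKruskalFP W X Z' ι' κ' →
    ∃! f : Z → Z', ∃ hf : QuasiEmb f, f ∘ ι = ι' ∧ f ∘ κ = κ' ∘ W.map f hf

/-- Kruskal derivative of a normal PO-dilator. -/
structure IsKruskalDeriv (W T : PODilator.{u})
    (ι : ∀ X : POrd.{u}, X → T.obj X)
    (κ : ∀ X : POrd.{u}, W.obj (T.obj X) → T.obj X) : Prop where
  normal : T.IsNormal
  initial : ∀ X : POrd.{u}, IsInitialKFP W X (T.obj X) (ι X) (κ X)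
  nat_iota : ∀ (X Y : POrd.{u}) (f : X → Y) (hf : QuasiEmb f),
      ι Y ∘ f = T.map f hf ∘ ι X
  nat_kappa : ∀ (X Y : POrd.{u}) (f : X → Y) (hf : QuasiEmb f),
      T.map f hf ∘ κ X = κ Y ∘ W.map (T.map f hf) (T.map_quasiEmb f hf)

/-!
The Kruskal order on `X ⊕ W(B)` is determined by the order on `B` once every element of `B` is
unfolded into an element of `X ⊕ W(B)`; normality of `W` makes it a partial order when this
unfolding is well-founded.  Iterating from the empty order gives a chain `∅ → X ⊕ W(∅) → ⋯` of
embeddings.  Because supports are finite, `W` preserves the direct limit `T` of this chain, so that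
`T ≅ X ⊕ W(T)`.  Well-foundedness makes `T` an initial Kruskal fixed point: evaluation in another
fixed point is defined by recursion along the chain, and it reflects the order because the order of
`T` is the least one that the fixed point conditions allow.  Initiality makes `T` functorial in `X`,
and the support of a term is the set of variables occurring in it.
-/

section QuasiEmbeddings

variable {X Y : Type*} [PartialOrder X] [PartialOrder Y] {f : X → Y}

theorem IsEmb.quasiEmb (hf : IsEmb f) : QuasiEmb f := fun x y => (hf x y).2

theorem isEmb_orderEmbedding (j : X ↪o Y) : IsEmb j := fun _ _ => j.le_iff_le.symm

theorem quasiEmb_orderEmbedding (j : X ↪o Y) : QuasiEmb j := (isEmb_orderEmbedding j).quasiEmb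

end QuasiEmbeddings

namespace POrd

variable {I : Type} [Preorder I] [IsDirectedOrder I] {F : I → POrd.{u}}
  (f : ∀ i j, i ≤ j → F i ↪o F j) [DirectedSystem (fun i => (F i : Type u)) (f · · ·)]

/-- The direct limit of a directed system of order embeddings. -/
def directLimit : POrd.{u} :=
  let L := DirectLimit (fun i => (F i : Type u)) f
  let le : L → L → Prop := DirectLimit.lift₂ f f (fun _ x y => x ≤ y) fun _ _ _ _ _ => by simp
  { carrier := L
    str :=
    { le := le
      lt := fun z w => le z w ∧ ¬ le w z
      lt_iff_le_not_ge := fun _ _ => Iff.rfl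
      le_refl := DirectLimit.induction f fun _ _ => by
        simp only [le, DirectLimit.lift₂_def, le_refl]
      le_trans := DirectLimit.induction₃ f fun _ _ _ _ h h' => by
        simp only [le, DirectLimit.lift₂_def] at h h' ⊢
        exact h.trans h'
      le_antisymm := DirectLimit.induction₂ f fun _ _ _ h h' => by
        simp only [le, DirectLimit.lift₂_def] at h h'
        rw [le_antisymm h h'] } }

/-- The canonical embedding of a stage into the direct limit. -/
def ofStage (i : I) : F i ↪o directLimit f :=
  OrderEmbedding.ofMapLEIff (β := directLimit f)
    (fun x => (⟦⟨i, x⟩⟧ : DirectLimit (fun i => (F i : Type u)) f))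
    fun _ _ => iff_of_eq (DirectLimit.lift₂_def ..)

variable {f}

theorem ofStage_map {i j : I} (h : i ≤ j) (x : F i) : ofStage f j (f i j h x) = ofStage f i x :=
  DirectLimit.mk_apply (F := fun i => (F i : Type u)) (f := f) i j x h

theorem directLimit_cases {P : directLimit f → Prop} (h : ∀ i x, P (ofStage f i x))
    (z : directLimit f) : P z :=
  DirectLimit.induction f h z

theorem directLimit_cases₂ {P : directLimit f → directLimit f → Prop}
    (h : ∀ i x y, P (ofStage f i x) (ofStage f i y)) (z w : directLimit f) : P z w :=
  DirectLimit.induction₂ f h z w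

theorem exists_subset_range_ofStage [Nonempty I] {s : Set (directLimit f)} (hs : s.Finite) :
    ∃ i, s ⊆ Set.range (ofStage f i) := by
  have mono : Monotone fun i => Set.range (ofStage f i) := by
    rintro i j h _ ⟨x, rfl⟩
    exact ⟨f i j h x, ofStage_map h x⟩
  have cover : (hs.toFinset : Set (directLimit f)) ⊆ ⋃ i, Set.range (ofStage f i) :=
    fun z _ => directLimit_cases (P := fun z => z ∈ ⋃ i, Set.range (ofStage f i))
      (fun i x => Set.mem_iUnion.2 ⟨i, Set.mem_range_self x⟩) z
  simpa using mono.directed_le.exists_mem_subset_of_finset_subset_biUnion cover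

/-- The map out of a direct limit given by a compatible family of maps on the stages. -/
def directLimitLift {C : Type*} (g : ∀ i, F i → C) (hg : ∀ i j h x, g i x = g j (f i j h x)) :
    directLimit f → C :=
  DirectLimit.lift f g hg

end POrd

section NatChains

variable {F : ℕ → Type*} [∀ n, LE (F n)] (f : ∀ n, F n ↪o F (n + 1))

/-- The composite order embeddings of an `ℕ`-indexed chain of order embeddings. -/
def chainEmb (n m : ℕ) (h : n ≤ m) : F n ↪o F m :=
  Nat.leRecOn h (fun {k} j => j.trans (f k)) (RelEmbedding.refl _)

theorem chainEmb_self {n : ℕ} (x : F n) : chainEmb f n n le_rfl x = x := by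
  rw [chainEmb, Nat.leRecOn_self, RelEmbedding.refl_apply]

theorem chainEmb_succ {n m : ℕ} (h : n ≤ m) (x : F n) :
    chainEmb f n (m + 1) (h.trans m.le_succ) x = f m (chainEmb f n m h x) := by
  rw [chainEmb, Nat.leRecOn_succ h, RelEmbedding.trans_apply, chainEmb]

instance chainEmb.directedSystem : DirectedSystem F (chainEmb f · · ·) where
  map_self _ := chainEmb_self f
  map_map k j i hij hjk x := by
    induction k, hjk using Nat.le_induction with
    | base => exact chainEmb_self f _
    | succ k hjk ih => rw [chainEmb_succ f hjk, ih, chainEmb_succ f (hij.trans hjk)]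

end NatChains

namespace PODilator

variable (W : PODilator.{u}) {X Y Z : POrd.{u}}

theorem map_map {f : X → Y} {g : Y → Z} {k : X → Z} (hf : QuasiEmb f) (hg : QuasiEmb g)
    (hk : QuasiEmb k) (h : ∀ x, g (f x) = k x) (σ : W.obj X) :
    W.map g hg (W.map f hf σ) = W.map k hk σ := by
  obtain rfl : g ∘ f = k := funext h
  exact (congrFun (W.map_comp f g hf hg) σ).symm

theorem map_congr_of_eqOn_supp {f g : X → Y} (hf : QuasiEmb f) (hg : QuasiEmb g) {σ : W.obj X}
    (h : Set.EqOn f g (W.supp σ)) : W.map f hf σ = W.map g hg σ := by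
  let incl : POrd.of (W.supp σ) → X := Subtype.val
  have incl_emb : IsEmb incl := fun _ _ => Iff.rfl
  obtain ⟨τ, hτ⟩ := W.supp_cond incl incl_emb.quasiEmb incl_emb σ fun z hz => ⟨⟨z, hz⟩, rfl⟩
  rw [← hτ, W.map_map _ hf (incl_emb.quasiEmb.comp hf) fun _ => rfl]
  exact (W.map_map _ hg _ (fun z : W.supp σ => (h z.2).symm) τ).symm

/-- The action of a dilator on order embeddings. -/
def mapEmb (j : X ↪o Y) : W.obj X ↪o W.obj Y :=
  OrderEmbedding.ofMapLEIff (W.map j (quasiEmb_orderEmbedding j)) fun σ τ =>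
    (W.map_emb j _ (isEmb_orderEmbedding j) σ τ).symm

theorem supp_mapEmb (j : X ↪o Y) (σ : W.obj X) : W.supp (W.mapEmb j σ) = j '' W.supp σ :=
  W.supp_natural j _ σ

theorem mapEmb_mapEmb {j : X ↪o Y} {k : Y ↪o Z} {l : X ↪o Z} (h : ∀ x, k (j x) = l x)
    (σ : W.obj X) : W.mapEmb k (W.mapEmb j σ) = W.mapEmb l σ :=
  W.map_map _ _ _ h σ

theorem mapEmb_eq_self {j : X ↪o X} (h : ∀ x, j x = x) (σ : W.obj X) : W.mapEmb j σ = σ :=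
  (W.map_congr_of_eqOn_supp _ quasiEmb_id fun x _ => h x).trans (congrFun (W.map_id X) σ)

theorem sumMap_mapEmb_mapEmb {V : Type*} {j : X ↪o Y} {k : Y ↪o Z} {l : X ↪o Z}
    (h : ∀ x, k (j x) = l x) (a : V ⊕ W.obj X) :
    Sum.map id (W.mapEmb k) (Sum.map id (W.mapEmb j) a) = Sum.map id (W.mapEmb l) a := by
  rcases a with x | σ
  · rfl
  · exact congrArg Sum.inr (W.mapEmb_mapEmb h σ)

theorem exists_mapEmb_ofStage {I : Type} [Preorder I] [IsDirectedOrder I] [Nonempty I]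
    {F : I → POrd.{u}} {f : ∀ i j, i ≤ j → F i ↪o F j}
    [DirectedSystem (fun i => (F i : Type u)) (f · · ·)] (σ : W.obj (POrd.directLimit f)) :
    ∃ i, ∃ τ : W.obj (F i), W.mapEmb (POrd.ofStage f i) τ = σ := by
  obtain ⟨i, hi⟩ := POrd.exists_subset_range_ofStage (W.supp_finite σ)
  exact ⟨i, W.supp_cond _ _ (isEmb_orderEmbedding (POrd.ofStage f i)) σ hi⟩

end PODilator

section KruskalOrder

variable {W : PODilator.{u}} {X B B' B'' : POrd.{u}} {e : B → X ⊕ W.obj B}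
  {e' : B' → X ⊕ W.obj B'} {e'' : B'' → X ⊕ W.obj B''}

/-- The order on `X ⊕ W(B)` that the conditions on Kruskal fixed points prescribe for terms
`ι x` and `κ τ`, when `e` unfolds the elements of `B` occurring in the support of `τ`. -/
inductive KruskalLE (e : B → X ⊕ W.obj B) : X ⊕ W.obj B → X ⊕ W.obj B → Prop
  | var {x y : X} : x ≤ y → KruskalLE e (.inl x) (.inl y)
  | node {σ τ : W.obj B} : σ ≤ τ → KruskalLE e (.inr σ) (.inr τ)
  | child {a : X ⊕ W.obj B} {τ : W.obj B} {z : B} :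
      z ∈ W.supp τ → KruskalLE e a (e z) → KruskalLE e a (.inr τ)

namespace KruskalLE

theorem refl : ∀ a, KruskalLE e a a
  | .inl _ => .var le_rfl
  | .inr _ => .node le_rfl

theorem inl_inl_iff {x y : X} : KruskalLE e (.inl x) (.inl y) ↔ x ≤ y :=
  ⟨fun h => by cases h; assumption, .var⟩

theorem not_inr_inl {σ : W.obj B} {y : X} : ¬ KruskalLE e (.inr σ) (.inl y) := nofun

theorem inl_inr_iff {x : X} {τ : W.obj B} :
    KruskalLE e (.inl x) (.inr τ) ↔ ∃ z ∈ W.supp τ, KruskalLE e (.inl x) (e z) :=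
  ⟨fun | .child hz h => ⟨_, hz, h⟩, fun ⟨_, hz, h⟩ => .child hz h⟩

theorem inr_inr_iff {σ τ : W.obj B} :
    KruskalLE e (.inr σ) (.inr τ) ↔
      σ ≤ τ ∨ ∃ z ∈ W.supp τ, KruskalLE e (.inr σ) (e z) :=
  ⟨fun | .node h => .inl h | .child hz h => .inr ⟨_, hz, h⟩,
    fun | .inl h => .node h | .inr ⟨_, hz, h⟩ => .child hz h⟩

end KruskalLE

/-- An order embedding that commutes with the structure maps of two coalgebras for `X ⊕ W(·)`. -/
def IsCoalgHom (e : B → X ⊕ W.obj B) (e' : B' → X ⊕ W.obj B') (j : B ↪o B') : Prop :=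
  ∀ b, e' (j b) = Sum.map id (W.mapEmb j) (e b)

theorem isCoalgHom_of_forall_eq {j : B ↪o B} (hj : ∀ b, j b = b) : IsCoalgHom e e j := by
  intro b
  rw [hj b]
  rcases e b with x | σ
  · rfl
  · exact congrArg Sum.inr (W.mapEmb_eq_self hj σ).symm

theorem IsCoalgHom.comp {j : B ↪o B'} {k : B' ↪o B''} {l : B ↪o B''} (hj : IsCoalgHom e e' j)
    (hk : IsCoalgHom e' e'' k) (h : ∀ b, k (j b) = l b) : IsCoalgHom e e'' l := by
  intro b
  rw [← h b, hk, hj, W.sumMap_mapEmb_mapEmb h]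

end KruskalOrder

/-- A well-founded coalgebra for `X ⊕ W(·)` that carries the Kruskal order: its elements are terms
over `X` with constructors from `W`, closed under taking subterms.  Well-foundedness of the subterm
relation is expressed as an induction principle for terms with subterms in the coalgebra. -/
structure KruskalCoalg (W : PODilator.{u}) (X : POrd.{u}) where
  carrier : POrd.{u}
  unfold : carrier → X ⊕ W.obj carrier
  le_iff : ∀ b c, b ≤ c ↔ KruskalLE unfold (unfold b) (unfold c)
  wellFounded : ∀ P : X ⊕ W.obj carrier → Prop, (∀ x, P (.inl x)) →
    (∀ τ, (∀ z ∈ W.supp τ, P (unfold z)) → P (.inr τ)) → ∀ a, P a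

namespace KruskalCoalg

variable {W : PODilator.{u}} {X : POrd.{u}}

instance : CoeSort (KruskalCoalg W X) (Type u) := ⟨fun C => C.carrier⟩

section Order

variable (C : KruskalCoalg W X)

theorem induction {P : X ⊕ W.obj C.carrier → Prop} (var : ∀ x, P (.inl x))
    (node : ∀ τ, (∀ z ∈ W.supp τ, P (C.unfold z)) → P (.inr τ)) (a : X ⊕ W.obj C.carrier) : P a :=
  C.wellFounded P var node a

theorem kruskalLE_trans (hW : W.IsNormal) {a b c : X ⊕ W.obj C.carrier}
    (hab : KruskalLE C.unfold a b) (hbc : KruskalLE C.unfold b c) : KruskalLE C.unfold a c := by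
  induction b using C.induction generalizing a c with
  | var x =>
    obtain ⟨hw⟩ := hab
    induction c using C.induction with
    | var y => exact .var (hw.trans (KruskalLE.inl_inl_iff.1 hbc))
    | node τ ih =>
      obtain ⟨z, hz, h⟩ := KruskalLE.inl_inr_iff.1 hbc
      exact .child hz (ih z hz h)
  | node σ ihσ =>
    induction c using C.induction with
    | var y => exact absurd hbc KruskalLE.not_inr_inl
    | node τ ihτ =>
      rcases KruskalLE.inr_inr_iff.1 hbc with hστ | ⟨z, hz, h⟩
      · cases hab with
        | node h => exact .node (h.trans hστ)
        | child hz h =>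
          obtain ⟨w, hw, hzw⟩ := hW _ _ _ hστ _ hz
          exact .child hw (ihσ _ hz h ((C.le_iff _ _).1 hzw))
      · exact .child hz (ihτ z hz h)

theorem not_kruskalLE_unfold (hW : W.IsNormal) {τ : W.obj C.carrier} {z : C}
    (hz : z ∈ W.supp τ) : ¬ KruskalLE C.unfold (.inr τ) (C.unfold z) := by
  suffices ∀ a τ z, C.unfold z = a → z ∈ W.supp τ → ¬ KruskalLE C.unfold (.inr τ) a from
    this _ τ z rfl hz
  intro a
  induction a using C.induction with
  | var y => exact fun _ _ _ _ => KruskalLE.not_inr_inl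
  | node ρ ih =>
    intro τ z hzρ hz hle
    have below_child : ∃ w ∈ W.supp ρ, KruskalLE C.unfold (.inr ρ) (C.unfold w) := by
      rcases KruskalLE.inr_inr_iff.1 hle with hτρ | ⟨w, hw, h⟩
      · obtain ⟨w, hw, hzw⟩ := hW _ _ _ hτρ z hz
        exact ⟨w, hw, hzρ ▸ (C.le_iff _ _).1 hzw⟩
      · exact ⟨w, hw, C.kruskalLE_trans hW (.child hz (hzρ ▸ .refl _)) h⟩
    obtain ⟨w, hw, h⟩ := below_child
    exact ih w hw ρ w rfl hw h

theorem kruskalLE_antisymm (hW : W.IsNormal) {a b : X ⊕ W.obj C.carrier}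
    (hab : KruskalLE C.unfold a b) (hba : KruskalLE C.unfold b a) : a = b := by
  cases hab with
  | var h => rw [le_antisymm h (KruskalLE.inl_inl_iff.1 hba)]
  | child hz h => exact absurd (C.kruskalLE_trans hW hba h) (C.not_kruskalLE_unfold hW hz)
  | node h =>
    cases hba with
    | node h' => rw [le_antisymm h h']
    | child hz h' => exact absurd (C.kruskalLE_trans hW (.node h) h') (C.not_kruskalLE_unfold hW hz)

variable {C}

theorem unfold_injective : Function.Injective C.unfold := fun b c h =>
  le_antisymm ((C.le_iff b c).2 (h ▸ .refl _)) ((C.le_iff c b).2 (h ▸ .refl _))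

end Order

section Hom

variable {C : KruskalCoalg W X} {B : POrd.{u}} {e : B → X ⊕ W.obj B} {j : C.carrier ↪o B}

theorem kruskalLE_map_iff (hj : IsCoalgHom C.unfold e j) {a b : X ⊕ W.obj C.carrier} :
    KruskalLE e (Sum.map id (W.mapEmb j) a) (Sum.map id (W.mapEmb j) b) ↔
      KruskalLE C.unfold a b := by
  induction b using C.induction with
  | var y =>
    rcases a with x | σ
    · exact KruskalLE.inl_inl_iff.trans KruskalLE.inl_inl_iff.symm
    · exact iff_of_false KruskalLE.not_inr_inl KruskalLE.not_inr_inl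
  | node τ ih =>
    have children : (∃ z ∈ W.supp (W.mapEmb j τ), KruskalLE e (Sum.map id (W.mapEmb j) a) (e z)) ↔
        ∃ z ∈ W.supp τ, KruskalLE C.unfold a (C.unfold z) := by
      rw [W.supp_mapEmb, Set.exists_mem_image]
      exact exists_congr fun z => and_congr_right fun hz => hj z ▸ ih z hz
    rcases a with x | σ
    · exact KruskalLE.inl_inr_iff.trans (children.trans KruskalLE.inl_inr_iff.symm)
    · exact KruskalLE.inr_inr_iff.trans
        ((or_congr (W.mapEmb j).le_iff_le children).trans KruskalLE.inr_inr_iff.symm)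

theorem induction_along (hj : IsCoalgHom C.unfold e j) {P : X ⊕ W.obj B → Prop}
    (var : ∀ x, P (.inl x)) (node : ∀ τ, (∀ z ∈ W.supp τ, P (e z)) → P (.inr τ))
    (a : X ⊕ W.obj C.carrier) : P (Sum.map id (W.mapEmb j) a) := by
  induction a using C.induction with
  | var x => exact var x
  | node τ ih =>
    refine node _ fun z hz => ?_
    rw [W.supp_mapEmb] at hz
    obtain ⟨z, hz, rfl⟩ := hz
    exact hj z ▸ ih z hz

end Hom

section Next

variable (hW : W.IsNormal) (C : KruskalCoalg W X)

/-- The partial order `X ⊕ W(C)`, ordered by `KruskalLE`. -/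
def nextCarrier : POrd.{u} where
  carrier := X ⊕ W.obj C.carrier
  str :=
    { le := KruskalLE C.unfold
      lt := fun a b => KruskalLE C.unfold a b ∧ ¬ KruskalLE C.unfold b a
      lt_iff_le_not_ge := fun _ _ => Iff.rfl
      le_refl := .refl
      le_trans := fun _ _ _ => C.kruskalLE_trans hW
      le_antisymm := fun _ _ => C.kruskalLE_antisymm hW }

/-- The structure map of a coalgebra, as an order embedding. -/
def up : C.carrier ↪o C.nextCarrier hW :=
  OrderEmbedding.ofMapLEIff C.unfold fun b c => (C.le_iff b c).symm

/-- The coalgebra of all terms whose immediate subterms lie in `C`. -/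
def next : KruskalCoalg W X where
  carrier := C.nextCarrier hW
  unfold := Sum.map id (W.mapEmb (C.up hW))
  le_iff _ _ := (kruskalLE_map_iff (C := C) (j := C.up hW) fun _ => rfl).symm
  wellFounded _ var node
    | .inl x => var x
    | .inr τ => node τ fun z _ => induction_along (j := C.up hW) (fun _ => rfl) var node z

theorem isCoalgHom_up : IsCoalgHom C.unfold (C.next hW).unfold (C.up hW) := fun _ => rfl

end Next

/-- The coalgebra without elements. -/
def empty (W : PODilator.{u}) (X : POrd.{u}) : KruskalCoalg W X where
  carrier := .of PEmpty
  unfold := PEmpty.elim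
  le_iff b := b.elim
  wellFounded _ var node
    | .inl x => var x
    | .inr τ => node τ fun z => z.elim

section DirectLimit

variable {I : Type} [Preorder I] [IsDirectedOrder I] {C : I → KruskalCoalg W X}
  {f : ∀ i j, i ≤ j → (C i).carrier ↪o (C j).carrier}
  [DirectedSystem (fun i => (C i).carrier.carrier) (f · · ·)]
  (hf : ∀ i j h, IsCoalgHom (C i).unfold (C j).unfold (f i j h))

/-- The structure map of a direct limit of coalgebras. -/
def directLimitUnfold : POrd.directLimit f → X ⊕ W.obj (POrd.directLimit f) :=
  POrd.directLimitLift
    (fun i b => Sum.map id (W.mapEmb (POrd.ofStage f i)) ((C i).unfold b))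
    fun i j h b => by
      rw [hf i j h b, W.sumMap_mapEmb_mapEmb (POrd.ofStage_map (f := f) h)]

theorem isCoalgHom_ofStage (i : I) :
    IsCoalgHom (C i).unfold (directLimitUnfold hf) (POrd.ofStage f i) := fun _ => rfl

/-- The direct limit of a directed system of coalgebras. -/
def directLimit [Nonempty I] : KruskalCoalg W X where
  carrier := POrd.directLimit f
  unfold := directLimitUnfold hf
  le_iff := POrd.directLimit_cases₂ fun i b c => by
    rw [OrderEmbedding.le_iff_le, (C i).le_iff, ← kruskalLE_map_iff (isCoalgHom_ofStage hf i)]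
    rfl
  wellFounded _ var node
    | .inl x => var x
    | .inr τ => by
      obtain ⟨i, τ, rfl⟩ := W.exists_mapEmb_ofStage τ
      exact induction_along (isCoalgHom_ofStage hf i) var node (.inr τ)

end DirectLimit

section InitialChain

variable (hW : W.IsNormal) (X)

/-- The chain `∅ → X ⊕ W(∅) → X ⊕ W(X ⊕ W(∅)) → ⋯`. -/
def initialChain : ℕ → KruskalCoalg W X
  | 0 => empty W X
  | n + 1 => (initialChain n).next hW

/-- The inclusions between the stages of the initial chain. -/
def initialChainEmb : ∀ n m, n ≤ m →
    ((initialChain X hW n).carrier ↪o (initialChain X hW m).carrier) :=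
  chainEmb fun n => (initialChain X hW n).up hW

variable {X} in
theorem initialChainEmb_self {n : ℕ} (b : initialChain X hW n) :
    initialChainEmb X hW n n le_rfl b = b :=
  chainEmb_self (F := fun n => (initialChain X hW n).carrier) _ b

variable {X} in
theorem initialChainEmb_succ {n m : ℕ} (h : n ≤ m) (b : initialChain X hW n) :
    initialChainEmb X hW n (m + 1) (h.trans m.le_succ) b =
      (initialChain X hW m).up hW (initialChainEmb X hW n m h b) :=
  chainEmb_succ (F := fun n => (initialChain X hW n).carrier) _ h b

theorem isCoalgHom_initialChainEmb (n m : ℕ) (h : n ≤ m) :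
    IsCoalgHom (initialChain X hW n).unfold (initialChain X hW m).unfold
      (initialChainEmb X hW n m h) := by
  induction m, h using Nat.le_induction with
  | base => exact isCoalgHom_of_forall_eq (initialChainEmb_self hW)
  | succ m h ih => exact ih.comp (isCoalgHom_up hW _) fun b => (initialChainEmb_succ hW h b).symm

instance : DirectedSystem (fun n => (initialChain X hW n).carrier.carrier)
    (initialChainEmb X hW · · ·) := chainEmb.directedSystem _

/-- The direct limit of the initial chain: all terms over `X` with constructors from `W`. -/
def terms : KruskalCoalg W X := directLimit (isCoalgHom_initialChainEmb X hW)

theorem ofStage_up (n : ℕ) (b : initialChain X hW n) :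
    POrd.ofStage (initialChainEmb X hW) (n + 1) ((initialChain X hW n).up hW b) =
      POrd.ofStage (initialChainEmb X hW) n b := by
  rw [← POrd.ofStage_map n.le_succ, initialChainEmb_succ hW le_rfl, initialChainEmb_self]

theorem unfold_terms_surjective : Function.Surjective (terms X hW).unfold := by
  rintro (x | σ)
  · exact ⟨POrd.ofStage (initialChainEmb X hW) 1 (Sum.inl x), rfl⟩
  · obtain ⟨n, σ, rfl⟩ := W.exists_mapEmb_ofStage σ
    exact ⟨POrd.ofStage (initialChainEmb X hW) (n + 1) (Sum.inr σ),
      congrArg Sum.inr (W.mapEmb_mapEmb (ofStage_up X hW n) σ)⟩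

end InitialChain

section FixedPoint

variable {C : KruskalCoalg W X} (hC : Function.Surjective C.unfold)

/-- The inverse of a surjective structure map: the term with given head and immediate subterms. -/
noncomputable def roll : X ⊕ W.obj C.carrier → C := Function.surjInv hC

theorem unfold_roll (a : X ⊕ W.obj C.carrier) : C.unfold (roll hC a) = a :=
  Function.surjInv_eq hC a

theorem roll_unfold (b : C) : roll hC (C.unfold b) = b :=
  Function.leftInverse_surjInv ⟨unfold_injective, hC⟩ b

theorem roll_le_roll {a b : X ⊕ W.obj C.carrier} :
    roll hC a ≤ roll hC b ↔ KruskalLE C.unfold a b := by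
  rw [C.le_iff, unfold_roll, unfold_roll]

theorem roll_le_iff {a : X ⊕ W.obj C.carrier} {b : C} :
    roll hC a ≤ b ↔ KruskalLE C.unfold a (C.unfold b) := by
  rw [C.le_iff, unfold_roll]

theorem isKruskalFP_roll :
    IsKruskalFP W X C.carrier (roll hC ∘ Sum.inl) (roll hC ∘ Sum.inr) where
  range_disjoint := by
    rw [← Set.disjoint_iff_inter_eq_empty, Set.disjoint_range_iff]
    exact fun _ _ h => Sum.inl_ne_inr (Function.injective_surjInv hC h)
  iota_le _ _ h := KruskalLE.inl_inl_iff.1 ((roll_le_roll hC).1 h)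
  iota_kappa _ _ := by
    simp only [Function.comp_apply, roll_le_iff, unfold_roll, KruskalLE.inl_inr_iff]
  kappa_iota _ _ h := KruskalLE.not_inr_inl ((roll_le_roll hC).1 h)
  kappa_kappa _ _ := by
    simp only [Function.comp_apply, roll_le_iff, unfold_roll, KruskalLE.inr_inr_iff]

end FixedPoint

end KruskalCoalg

section Evaluation

variable {W : PODilator.{u}} {X Z B B' : POrd.{u}} (ι : X → Z) (κ : W.obj Z → Z)

/-- The value in `Z` of a term whose immediate subterms are evaluated by `f`. -/
def evalStep (f : B → Z) (hf : QuasiEmb f) : X ⊕ W.obj B → Z := Sum.elim ι (κ ∘ W.map f hf)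

/-- `f` is a quasi embedding that evaluates the elements of a coalgebra `e`, viewed as terms, by
recursion over these terms. -/
def IsEval (e : B → X ⊕ W.obj B) (f : B → Z) : Prop :=
  ∃ hf : QuasiEmb f, ∀ b, evalStep ι κ f hf (e b) = f b

variable {ι κ}

theorem evalStep_map {j : B ↪o B'} {f : B → Z} {g : B' → Z} (hf : QuasiEmb f) (hg : QuasiEmb g)
    (h : ∀ b, g (j b) = f b) (a : X ⊕ W.obj B) :
    evalStep ι κ g hg (Sum.map id (W.mapEmb j) a) = evalStep ι κ f hf a := by
  rcases a with x | σ
  · rfl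
  · exact congrArg κ (W.map_map _ _ _ h σ)

theorem IsEval.comp_coalgHom {e : B → X ⊕ W.obj B} {e' : B' → X ⊕ W.obj B'} {j : B ↪o B'}
    {f : B' → Z} (hf : IsEval ι κ e' f) (hj : IsCoalgHom e e' j) : IsEval ι κ e (f ∘ j) := by
  obtain ⟨hf, hstep⟩ := hf
  have hfj : QuasiEmb (f ∘ j) := (quasiEmb_orderEmbedding j).comp hf
  refine ⟨hfj, fun b => ?_⟩
  rw [← evalStep_map hfj hf fun _ => rfl, ← hj, hstep, Function.comp_apply]

namespace IsKruskalFP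

theorem precomp (hZ : IsKruskalFP W X Z ι κ) {Y : POrd.{u}} {f : Y → X} (hf : QuasiEmb f) :
    IsKruskalFP W Y Z (ι ∘ f) κ where
  range_disjoint := Set.subset_empty_iff.1 <| hZ.range_disjoint ▸
    Set.inter_subset_inter_left _ (Set.range_comp_subset_range f ι)
  iota_le x y h := hf x y (hZ.iota_le _ _ h)
  iota_kappa x := hZ.iota_kappa (f x)
  kappa_iota σ y := hZ.kappa_iota σ (f y)
  kappa_kappa := hZ.kappa_kappa

theorem evalStep_le_kappa (hZ : IsKruskalFP W X Z ι κ) {f : B → Z} (hf : QuasiEmb f)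
    {a : X ⊕ W.obj B} {τ : W.obj Z} {z : Z} (hz : z ∈ W.supp τ)
    (h : evalStep ι κ f hf a ≤ z) : evalStep ι κ f hf a ≤ κ τ := by
  rcases a with x | σ
  · exact (hZ.iota_kappa x τ).2 ⟨z, hz, h⟩
  · exact (hZ.kappa_kappa _ τ).2 (.inr ⟨z, hz, h⟩)

theorem evalStep_mono (hZ : IsKruskalFP W X Z ι κ) (hι : Monotone ι) {e : B → X ⊕ W.obj B}
    {f : B → Z} (hf : IsEmb f) (hstep : ∀ b, evalStep ι κ f hf.quasiEmb (e b) = f b)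
    {a b : X ⊕ W.obj B} (h : KruskalLE e a b) :
    evalStep ι κ f hf.quasiEmb a ≤ evalStep ι κ f hf.quasiEmb b := by
  induction h with
  | var h => exact hι h
  | node h => exact (hZ.kappa_kappa _ _).2 (.inl ((W.map_emb f _ hf _ _).1 h))
  | child hz _ ih =>
    refine hZ.evalStep_le_kappa _ ?_ (hstep _ ▸ ih)
    exact W.supp_natural f _ _ ▸ Set.mem_image_of_mem f hz

theorem kruskalLE_of_evalStep_le (hZ : IsKruskalFP W X Z ι κ) {C : KruskalCoalg W X}
    {f : C.carrier → Z} (hf : QuasiEmb f) (hstep : ∀ b, evalStep ι κ f hf (C.unfold b) = f b)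
    {a b : X ⊕ W.obj C.carrier} (h : evalStep ι κ f hf a ≤ evalStep ι κ f hf b) :
    KruskalLE C.unfold a b := by
  induction b using C.induction with
  | var y =>
    rcases a with x | σ
    · exact .var (hZ.iota_le x y h)
    · exact absurd h (hZ.kappa_iota _ y)
  | node τ ih =>
    have of_child (hle : ∃ z ∈ W.supp (W.map f hf τ), evalStep ι κ f hf a ≤ z) :
        KruskalLE C.unfold a (.inr τ) := by
      rw [W.supp_natural, Set.exists_mem_image] at hle
      obtain ⟨z, hz, hle⟩ := hle
      exact .child hz (ih z hz (hstep z ▸ hle))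
    rcases a with x | σ
    · exact of_child ((hZ.iota_kappa x _).1 h)
    · exact ((hZ.kappa_kappa _ _).1 h).elim (fun h => .node (W.map_quasiEmb f hf _ _ h)) of_child

end IsKruskalFP

end Evaluation

namespace KruskalCoalg

variable {W : PODilator.{u}} {X Z : POrd.{u}} {ι : X → Z} {κ : W.obj Z → Z}

theorem isEval_unique {C : KruskalCoalg W X} {f g : C.carrier → Z} (hf : IsEval ι κ C.unfold f)
    (hg : IsEval ι κ C.unfold g) : f = g := by
  obtain ⟨hf, hfstep⟩ := hf
  obtain ⟨hg, hgstep⟩ := hg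
  have evalStep_eq (a) : evalStep ι κ f hf a = evalStep ι κ g hg a := by
    induction a using C.induction with
    | var x => rfl
    | node τ ih =>
      refine congrArg κ (W.map_congr_of_eqOn_supp hf hg fun z hz => ?_)
      rw [← hfstep, ih z hz, hgstep]
  exact funext fun b => by rw [← hfstep, evalStep_eq, hgstep]

theorem exists_isEval_empty (ι : X → Z) (κ : W.obj Z → Z) :
    ∃ f, IsEval ι κ (empty W X).unfold f :=
  ⟨PEmpty.elim, PEmpty.rec, PEmpty.rec⟩

theorem exists_isEval_next (hZ : IsKruskalFP W X Z ι κ) (hW : W.IsNormal) {C : KruskalCoalg W X}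
    (hC : ∃ f, IsEval ι κ C.unfold f) : ∃ f, IsEval ι κ (C.next hW).unfold f := by
  obtain ⟨f, hf, hstep⟩ := hC
  exact ⟨evalStep ι κ f hf, fun _ _ => hZ.kruskalLE_of_evalStep_le hf hstep,
    evalStep_map hf _ hstep⟩

theorem exists_isEval_directLimit {I : Type} [Preorder I] [IsDirectedOrder I] [Nonempty I]
    {C : I → KruskalCoalg W X} {f : ∀ i j, i ≤ j → (C i).carrier ↪o (C j).carrier}
    [DirectedSystem (fun i => (C i).carrier.carrier) (f · · ·)]
    (hf : ∀ i j h, IsCoalgHom (C i).unfold (C j).unfold (f i j h))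
    (hC : ∀ i, ∃ g, IsEval ι κ (C i).unfold g) :
    ∃ g, IsEval ι κ (directLimit hf).unfold g := by
  choose g hg using hC
  let lift : POrd.directLimit f → Z := POrd.directLimitLift g fun i j h b =>
    congrFun (isEval_unique (hg i) ((hg j).comp_coalgHom (hf i j h))) b
  have lift_quasiEmb : QuasiEmb lift := POrd.directLimit_cases₂ fun i b c h =>
    (POrd.ofStage f i).le_iff_le.2 ((hg i).1 b c h)
  exact ⟨lift, lift_quasiEmb, POrd.directLimit_cases fun i b =>
    (evalStep_map (hg i).1 lift_quasiEmb (fun _ => rfl) _).trans ((hg i).2 b)⟩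

section Terms

variable (hW : W.IsNormal)

theorem exists_isEval_terms (hZ : IsKruskalFP W X Z ι κ) :
    ∃ f, IsEval ι κ (terms X hW).unfold f := by
  refine exists_isEval_directLimit (isCoalgHom_initialChainEmb X hW) fun n => ?_
  induction n with
  | zero => exact exists_isEval_empty ι κ
  | succ n ih => exact exists_isEval_next hZ hW ih

-- `W.map f` is monotone only for embeddings `f`, so monotonicity has to be propagated from stage to
-- stage instead of being proved by induction on terms.
theorem isEmb_of_isEval_initialChain (hZ : IsKruskalFP W X Z ι κ) (hι : Monotone ι) {n : ℕ}
    {f : (initialChain X hW n).carrier → Z} (hf : IsEval ι κ (initialChain X hW n).unfold f) :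
    IsEmb f := by
  induction n with
  | zero => exact PEmpty.rec
  | succ n ih =>
    let C := initialChain X hW n
    have hf_up := hf.comp_coalgHom (C.isCoalgHom_up hW)
    have f_eq (a) : f a = evalStep ι κ (f ∘ C.up hW) hf_up.1 a := by
      rw [← hf.2]
      exact evalStep_map _ _ (fun _ => rfl) a
    refine fun a b => ⟨fun h => ?_, hf.1 a b⟩
    rw [f_eq, f_eq]
    exact hZ.evalStep_mono hι (ih hf_up) hf_up.2 h

theorem isEmb_of_isEval_terms (hZ : IsKruskalFP W X Z ι κ) (hι : Monotone ι)
    {f : (terms X hW).carrier → Z} (hf : IsEval ι κ (terms X hW).unfold f) : IsEmb f :=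
  POrd.directLimit_cases₂ fun n b c =>
    (POrd.ofStage (initialChainEmb X hW) n).le_iff_le.trans <|
      isEmb_of_isEval_initialChain hW hZ hι
        (hf.comp_coalgHom (isCoalgHom_ofStage (isCoalgHom_initialChainEmb X hW) n)) b c

end Terms

section Initial

variable {C : KruskalCoalg W X} (hC : Function.Surjective C.unfold)

theorem isEval_iff {f : C.carrier → Z} :
    IsEval ι κ C.unfold f ↔ ∃ hf : QuasiEmb f,
      f ∘ (roll hC ∘ Sum.inl) = ι ∧ f ∘ (roll hC ∘ Sum.inr) = κ ∘ W.map f hf := by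
  refine exists_congr fun hf => ⟨fun h => ⟨?_, ?_⟩, fun ⟨hι, hκ⟩ b => ?_⟩
  · exact funext fun x => by simp [← h, unfold_roll, evalStep]
  · exact funext fun σ => by simp [← h, unfold_roll, evalStep]
  · rw [evalStep, ← hι, ← hκ, ← Function.comp_assoc, ← Function.comp_assoc, Sum.elim_comp_inl_inr,
      Function.comp_apply, roll_unfold]

theorem isInitialKFP_terms (X : POrd.{u}) (hW : W.IsNormal) :
    IsInitialKFP W X (terms X hW).carrier (roll (unfold_terms_surjective X hW) ∘ Sum.inl)
      (roll (unfold_terms_surjective X hW) ∘ Sum.inr) := by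
  refine ⟨isKruskalFP_roll _, fun Z ι κ hZ => ?_⟩
  simp only [← isEval_iff]
  obtain ⟨f, hf⟩ := exists_isEval_terms hW hZ
  exact ⟨f, hf, fun g hg => isEval_unique hg hf⟩

end Initial

end KruskalCoalg

section Occurrence

variable {W : PODilator.{u}} {X Y B : POrd.{u}} {e : B → X ⊕ W.obj B}

/-- The variable `x` occurs in a term whose subterms are given by `e`. -/
inductive Occurs (e : B → X ⊕ W.obj B) (x : X) : X ⊕ W.obj B → Prop
  | var : Occurs e x (.inl x)
  | child {τ : W.obj B} {z : B} : z ∈ W.supp τ → Occurs e x (e z) → Occurs e x (.inr τ)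

theorem Occurs.kruskalLE {x : X} {a : X ⊕ W.obj B} (h : Occurs e x a) :
    KruskalLE e (.inl x) a := by
  induction h with
  | var => exact .refl _
  | child hz _ ih => exact .child hz ih

theorem KruskalLE.exists_occurs {x : X} {b : X ⊕ W.obj B} (h : KruskalLE e (.inl x) b) :
    ∃ y, Occurs e y b ∧ x ≤ y := by
  generalize ha : Sum.inl x = a at h
  induction h with
  | var h => exact ⟨_, .var, Sum.inl.inj ha ▸ h⟩
  | node => cases ha
  | child hz _ ih => exact (ih ha).imp fun _ => And.imp_left (.child hz)

/-- The set of variables of a term whose subterms are given by `e`. -/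
def vars (e : B → X ⊕ W.obj B) (a : X ⊕ W.obj B) : Set X := {x | Occurs e x a}

theorem vars_inl (x : X) : vars e (.inl x) = {x} :=
  Set.ext fun _ => ⟨fun | .var => rfl, fun h => h ▸ .var⟩

theorem vars_inr (τ : W.obj B) : vars e (.inr τ) = ⋃ z ∈ W.supp τ, vars e (e z) := by
  refine Set.ext fun x => Iff.trans ?_ Set.mem_iUnion₂.symm
  exact ⟨fun | .child hz h => ⟨_, hz, h⟩, fun ⟨_, hz, h⟩ => .child hz h⟩

namespace KruskalCoalg

section

variable (C : KruskalCoalg W X)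

theorem finite_vars (a : X ⊕ W.obj C.carrier) : (vars C.unfold a).Finite := by
  induction a using C.induction with
  | var x => exact vars_inl x ▸ Set.finite_singleton x
  | node τ ih => exact vars_inr τ ▸ (W.supp_finite τ).biUnion ih

theorem leFin_vars (hW : W.IsNormal) {a b : X ⊕ W.obj C.carrier} (h : KruskalLE C.unfold a b) :
    LeFin (vars C.unfold a) (vars C.unfold b) :=
  fun _ hx => (C.kruskalLE_trans hW (Occurs.kruskalLE hx) h).exists_occurs

end

variable {C : KruskalCoalg W X} {D : KruskalCoalg W Y} {hD : Function.Surjective D.unfold}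
  {f : X → Y} {g : C.carrier → D.carrier}

theorem vars_unfold_eq_image
    (hg : IsEval (roll hD ∘ Sum.inl ∘ f) (roll hD ∘ Sum.inr) C.unfold g) (b : C) :
    vars D.unfold (D.unfold (g b)) = f '' vars C.unfold (C.unfold b) := by
  obtain ⟨hg, hstep⟩ := hg
  rw [← hstep]
  induction C.unfold b using C.induction with
  | var x =>
    rw [evalStep, Sum.elim_inl, Function.comp_apply, unfold_roll, Function.comp_apply, vars_inl,
      vars_inl, Set.image_singleton]
  | node τ ih =>
    rw [evalStep, Sum.elim_inr, Function.comp_apply, Function.comp_apply, unfold_roll, vars_inr,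
      vars_inr, W.supp_natural, Set.biUnion_image, Set.image_iUnion₂]
    exact Set.iUnion₂_congr fun z hz => hstep z ▸ ih z hz

theorem mem_range_of_vars_subset (hC : Function.Surjective C.unfold)
    (hg : IsEval (roll hD ∘ Sum.inl ∘ f) (roll hD ∘ Sum.inr) C.unfold g) (hg_emb : IsEmb g)
    {b : D} (hb : vars D.unfold (D.unfold b) ⊆ Set.range f) : b ∈ Set.range g := by
  obtain ⟨_, hstep⟩ := hg
  rw [← roll_unfold hD b]
  generalize D.unfold b = a at hb ⊢
  induction a using D.induction with
  | var y =>
    obtain ⟨x, rfl⟩ : y ∈ Set.range f := hb .var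
    exact ⟨roll hC (.inl x), by rw [← hstep, unfold_roll]; rfl⟩
  | node τ ih =>
    have supp_subset : W.supp τ ⊆ Set.range g := fun z hz => by
      rw [← roll_unfold hD z]
      exact ih z hz fun y hy => hb (.child hz hy)
    obtain ⟨σ, rfl⟩ := W.supp_cond g hg_emb.quasiEmb hg_emb τ supp_subset
    exact ⟨roll hC (.inr σ), by rw [← hstep, unfold_roll]; rfl⟩

end KruskalCoalg

end Occurrence

section KruskalDerivative

open KruskalCoalg

variable {W : PODilator.{u}} (hW : W.IsNormal) {X Y Z : POrd.{u}}

/-- A variable, as a term: the map `ι` of the derivative. -/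
noncomputable def termVar (X : POrd.{u}) : X → terms X hW :=
  roll (unfold_terms_surjective X hW) ∘ Sum.inl

/-- The application of a constructor from `W` to terms: the map `κ` of the derivative. -/
noncomputable def termNode (X : POrd.{u}) : W.obj (terms X hW).carrier → terms X hW :=
  roll (unfold_terms_surjective X hW) ∘ Sum.inr

theorem exists_isEval_rename {f : X → Y} (hf : QuasiEmb f) :
    ∃ g, IsEval (termVar hW Y ∘ f) (termNode hW Y) (terms X hW).unfold g :=
  exists_isEval_terms hW ((isKruskalFP_roll _).precomp hf)

/-- The renaming of the variables of a term along a quasi embedding: the action of the derivative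
on morphisms. -/
noncomputable def rename (f : X → Y) (hf : QuasiEmb f) :
    (terms X hW).carrier → (terms Y hW).carrier :=
  (exists_isEval_rename hW hf).choose

theorem isEval_rename (f : X → Y) (hf : QuasiEmb f) :
    IsEval (termVar hW Y ∘ f) (termNode hW Y) (terms X hW).unfold (rename hW f hf) :=
  (exists_isEval_rename hW hf).choose_spec

theorem quasiEmb_rename (f : X → Y) (hf : QuasiEmb f) : QuasiEmb (rename hW f hf) :=
  (isEval_rename hW f hf).1

theorem rename_comp_termVar (f : X → Y) (hf : QuasiEmb f) :
    rename hW f hf ∘ termVar hW X = termVar hW Y ∘ f :=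
  ((isEval_iff _).1 (isEval_rename hW f hf)).2.1

theorem rename_comp_termNode (f : X → Y) (hf : QuasiEmb f) :
    rename hW f hf ∘ termNode hW X =
      termNode hW Y ∘ W.map (rename hW f hf) (quasiEmb_rename hW f hf) :=
  ((isEval_iff _).1 (isEval_rename hW f hf)).2.2

theorem rename_unique {f : X → Y} (hf : QuasiEmb f)
    {g : (terms X hW).carrier → (terms Y hW).carrier} (hg : QuasiEmb g)
    (hvar : g ∘ termVar hW X = termVar hW Y ∘ f)
    (hnode : g ∘ termNode hW X = termNode hW Y ∘ W.map g hg) : rename hW f hf = g :=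
  isEval_unique (isEval_rename hW f hf) ((isEval_iff _).2 ⟨hg, hvar, hnode⟩)

theorem rename_id : rename hW (id : X → X) quasiEmb_id = id :=
  rename_unique hW _ quasiEmb_id rfl (by rw [W.map_id]; rfl)

theorem rename_comp {f : X → Y} {g : Y → Z} (hf : QuasiEmb f) (hg : QuasiEmb g) :
    rename hW (g ∘ f) (hf.comp hg) = rename hW g hg ∘ rename hW f hf := by
  refine rename_unique hW _ ((quasiEmb_rename hW f hf).comp (quasiEmb_rename hW g hg)) ?_ ?_
  · rw [Function.comp_assoc, rename_comp_termVar, ← Function.comp_assoc, rename_comp_termVar,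
      Function.comp_assoc]
  · rw [Function.comp_assoc, rename_comp_termNode, ← Function.comp_assoc, rename_comp_termNode,
      Function.comp_assoc, W.map_comp]

theorem monotone_termVar : Monotone (termVar hW X) := fun _ _ h =>
  (roll_le_roll _).2 (.var h)

theorem isEmb_rename {f : X → Y} (hf : IsEmb f) : IsEmb (rename hW f hf.quasiEmb) :=
  isEmb_of_isEval_terms hW ((isKruskalFP_roll _).precomp hf.quasiEmb)
    (fun x y h => monotone_termVar hW ((hf x y).1 h)) (isEval_rename hW f hf.quasiEmb)

/-- The dilator of terms with constructors from `W`, supported by their variables. -/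
noncomputable def kruskalDerivative : PODilator.{u} where
  obj X := (terms X hW).carrier
  map := rename hW
  supp b := vars (terms _ hW).unfold ((terms _ hW).unfold b)
  map_quasiEmb := quasiEmb_rename hW
  map_id _ := rename_id hW
  map_comp _ _ := rename_comp hW
  map_emb _ _ := isEmb_rename hW
  supp_finite _ := finite_vars _ _
  supp_natural f hf := vars_unfold_eq_image (isEval_rename hW f hf)
  supp_cond f hf hf_emb _ :=
    mem_range_of_vars_subset (unfold_terms_surjective _ hW) (isEval_rename hW f hf)
      (isEmb_rename hW hf_emb)

theorem isNormal_kruskalDerivative : (kruskalDerivative hW).IsNormal := fun _ σ τ h =>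
  leFin_vars _ hW (((terms _ hW).le_iff σ τ).1 h)

end KruskalDerivative

/-- Every normal PO-dilator has a Kruskal derivative. -/
theorem exists_kruskalDeriv (W : PODilator.{u}) (hW : W.IsNormal) :
    ∃ (T : PODilator.{u}) (ι : ∀ X : POrd.{u}, X → T.obj X)
      (κ : ∀ X : POrd.{u}, W.obj (T.obj X) → T.obj X),
      IsKruskalDeriv W T ι κ := by
  refine ⟨kruskalDerivative hW, termVar hW, termNode hW, ?_⟩
  exact {
    normal := isNormal_kruskalDerivative hW
    initial := fun X => KruskalCoalg.isInitialKFP_terms X hW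
    nat_iota := fun _ _ f hf => (rename_comp_termVar hW f hf).symm
    nat_kappa := fun _ _ f hf => rename_comp_termNode hW f hf }
end

section
/- If W is a normal WPO-dilator and (TW, ι, κ) is a Kruskal derivative of W, then TW is a normal WPO-dilator, i.e., TW(X) is a well partial order for every well partial order X. -/
universe u

/-!
For an initial Kruskal fixed point `Z` over a well partial order `X`, a minimal bad sequence
argument in the style of Nash-Williams works once one knows that `Z = rng ι ∪ rng κ`, that `ι` is
monotone and that some height function makes the elements of `supp σ` smaller than `κ σ`. None of
this is part of the definition, which allows `ι x` and `ι y` to be incomparable when `x < y`.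

It is extracted from initiality by rebuilding the fixed point inside `Z`, with `x ≤ y` implying
`ι x ≤ ι y` from the outset: starting from the empty order, repeatedly apply the clauses for
comparisons of `ι x` and `κ σ`. The limit is a partial order on a subset of `Z` and a Kruskal fixed
point. As it has more comparisons than `Z`, not every element of `W(Z)` need come from it, so the
subset could be proper, but the inclusion into `Z` is a quasi embedding that respects `ι` and `κ`.
Hence initiality yields a right inverse of the inclusion, and the order rebuilt is that of `Z`.
-/

theorem QuasiEmb.injective {X Y : Type*} [PartialOrder X] [PartialOrder Y] {f : X → Y}
    (hf : QuasiEmb f) : Function.Injective f :=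
  fun x y h => le_antisymm (hf x y h.le) (hf y x h.ge)

/-! ### Minimal bad sequences -/

section WellPartialOrder

variable {α β : Type*} [PartialOrder α] [PartialOrder β]

theorem IsWpo.isPWO_range (hα : IsWpo α) {f : α → β} (hf : Monotone f) :
    (Set.range f).IsPWO := by
  rw [← Set.image_univ]
  exact (Set.isPWO_univ_iff.2 ⟨hα⟩).image_of_monotone hf

open Set.PartiallyWellOrderedOn

theorem exists_isBadSeq_splice {f g : ℕ → α} {m : ℕ → ℕ}
    (hf : ∀ i j, i < j → ¬ f i ≤ f j) (hg : ∀ i j, i < j → ¬ g i ≤ g j)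
    (hgf : ∀ k, g k ≤ f (m k)) (hm : ∀ k, m 0 ≤ m k) :
    ∃ e : ℕ → α, (∀ i < m 0, f i = e i) ∧ e (m 0) = g 0 ∧ IsBadSeq (· ≤ ·) Set.univ e := by
  refine ⟨fun i => if i < m 0 then f i else g (i - m 0), fun i hi => by simp [hi], by simp,
    fun _ => trivial, fun i j hij => ?_⟩
  by_cases hj : j < m 0
  · simpa only [hj, hij.trans hj, if_true] using hf i j hij
  by_cases hi : i < m 0
  · simp only [hi, hj, if_true, if_false]
    exact fun h => hf i (m (j - m 0)) (hi.trans_le (hm _)) (h.trans (hgf _))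
  · simp only [hi, hj, if_false]
    exact hg _ _ (by omega)

theorem isPWO_below_of_isMinBadSeq {f : ℕ → α} {rk : α → ℕ}
    (hf : IsBadSeq (· ≤ ·) Set.univ f) (hmin : ∀ n, IsMinBadSeq (· ≤ ·) rk Set.univ n f) :
    {b | ∃ n, b ≤ f n ∧ rk b < rk (f n)}.IsPWO := by
  rw [Set.IsPWO, iff_forall_not_isBadSeq]
  rintro g ⟨hgB, hg⟩
  choose m hgf hrk using hgB
  let k₀ := Function.argmin m
  obtain ⟨e, hfe, he, hbad⟩ := exists_isBadSeq_splice (g := fun k => g (k₀ + k))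
    (m := fun k => m (k₀ + k)) hf.2 (fun i j hij => hg _ _ (by omega)) (fun k => hgf _)
    (fun k => Function.argmin_le m _)
  exact hmin _ e hfe (he ▸ hrk k₀) hbad

theorem isWpo_of_forall_isPWO (rk : α → ℕ)
    (h : ∀ B : Set α, B.IsPWO → {a | ∀ b ≤ a, rk b < rk a → b ∈ B}.IsPWO) : IsWpo α := by
  by_contra hα
  simp only [IsWpo, not_forall, not_exists, not_and] at hα
  obtain ⟨f₀, hf₀⟩ := hα
  obtain ⟨f, hf, hmin⟩ := exists_min_bad_of_exists_bad (· ≤ ·) rk Set.univ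
    ⟨f₀, fun _ => trivial, hf₀⟩
  exact (iff_forall_not_isBadSeq _ _).1 (h _ (isPWO_below_of_isMinBadSeq hf hmin)) f
    ⟨fun n b hb hrk => ⟨n, hb, hrk⟩, hf.2⟩

end WellPartialOrder

section FixedPoint

variable {W : PODilator.{u}} {X Z : POrd.{u}} {ι : X → Z} {κ : W.obj Z → Z}

theorem IsKruskalFP.isWpo (hK : IsKruskalFP W X Z ι κ) (hI : KFPCondI W X Z ι κ) (hW : W.IsWPO)
    (hX : IsWpo X) : IsWpo Z := by
  have cover (z : Z) : z ∈ Set.range ι ∪ Set.range κ := hI.range_union ▸ Set.mem_univ z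
  have le_kappa_of_mem_supp {z : Z} {σ : W.obj Z} (hz : z ∈ W.supp σ) : z ≤ κ σ := by
    obtain ⟨x, rfl⟩ | ⟨τ, rfl⟩ := cover z
    · exact (hK.iota_kappa x σ).2 ⟨_, hz, le_rfl⟩
    · exact (hK.kappa_kappa τ σ).2 (.inr ⟨_, hz, le_rfl⟩)
  obtain ⟨h, hh⟩ := hI.height
  refine isWpo_of_forall_isPWO h fun B hB => ?_
  let v : POrd.of B → Z := Subtype.val
  have hv : IsEmb v := fun _ _ => Iff.rfl
  have hvq : QuasiEmb v := fun _ _ => id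
  have hι : (Set.range ι).IsPWO := hX.isPWO_range hI.iota_mono
  have hκ : (Set.range (κ ∘ W.map v hvq)).IsPWO :=
    (hW (POrd.of B) hB).isPWO_range fun σ τ hστ =>
      (hK.kappa_kappa _ _).2 (.inl ((W.map_emb v hvq hv σ τ).1 hστ))
  refine (hι.union hκ).mono fun a ha => ?_
  obtain ⟨x, rfl⟩ | ⟨σ, rfl⟩ := cover a
  · exact .inl ⟨x, rfl⟩
  · obtain ⟨τ, rfl⟩ := W.supp_cond v hvq hv σ fun z hz =>
      ⟨⟨z, ha z (le_kappa_of_mem_supp hz) (hh z σ hz)⟩, rfl⟩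
    exact .inr ⟨τ, rfl⟩

end FixedPoint

/-! ### Partial orders on subsets of a partial order -/

/-- A partial order on a subset of `Z` such that the inclusion into `Z` is a quasi embedding. The
subset is encoded as `{z | R z z}`. -/
structure IsQuasiSuborder {Z : POrd.{u}} (R : Z → Z → Prop) : Prop where
  trans : ∀ {a b c}, R a b → R b c → R a c
  antisymm : ∀ {a b}, R a b → R b a → a = b
  left : ∀ {a b}, R a b → R a a
  right : ∀ {a b}, R a b → R b b
  of_le : ∀ {a b}, R a a → R b b → a ≤ b → R a b

namespace IsQuasiSuborder

variable {Z : POrd.{u}} {R : Z → Z → Prop}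

/-- The subset `{z | R z z}` ordered by `R`, on which dilators are to be evaluated. -/
def toPOrd (hR : IsQuasiSuborder R) : POrd.{u} where
  carrier := {z : Z // R z z}
  str :=
    { le := fun a b => R a.1 b.1
      lt := fun a b => R a.1 b.1 ∧ ¬ R b.1 a.1
      lt_iff_le_not_ge := fun _ _ => Iff.rfl
      le_refl := fun a => a.2
      le_trans := fun _ _ _ => hR.trans
      le_antisymm := fun _ _ hab hba => Subtype.ext (hR.antisymm hab hba) }

/-- The inclusion of a quasi suborder into its ambient order. -/
def incl (hR : IsQuasiSuborder R) : hR.toPOrd → Z := fun a => a.1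

theorem quasiEmb_incl (hR : IsQuasiSuborder R) : QuasiEmb hR.incl :=
  fun a b => hR.of_le a.2 b.2

end IsQuasiSuborder

/-- `R` is the restriction of `R'` to the subset `{z | R z z}`. -/
structure IsRestriction {Z : Type*} (R R' : Z → Z → Prop) : Prop where
  mono : ∀ {a b}, R a b → R' a b
  reflect : ∀ {a b}, R a a → R b b → R' a b → R a b

namespace IsRestriction

theorem refl {Z : Type*} (R : Z → Z → Prop) : IsRestriction R R := ⟨id, fun _ _ => id⟩

theorem trans {Z : Type*} {R R' R'' : Z → Z → Prop} (h : IsRestriction R R')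
    (h' : IsRestriction R' R'') : IsRestriction R R'' :=
  ⟨fun hab => h'.mono (h.mono hab),
    fun ha hb hab => h.reflect ha hb (h'.reflect (h.mono ha) (h.mono hb) hab)⟩

variable {Z : POrd.{u}} {R R' : Z → Z → Prop}

/-- The inclusion between the orders given by `R` and `R'` when the former restricts the latter. -/
def incl (h : IsRestriction R R') (hR : IsQuasiSuborder R) (hR' : IsQuasiSuborder R') :
    hR.toPOrd → hR'.toPOrd := fun a => ⟨a.1, h.mono a.2⟩

theorem isEmb_incl (h : IsRestriction R R') (hR : IsQuasiSuborder R) (hR' : IsQuasiSuborder R') :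
    IsEmb (h.incl hR hR') := fun a b => ⟨h.mono, h.reflect a.2 b.2⟩

theorem quasiEmb_incl (h : IsRestriction R R') (hR : IsQuasiSuborder R)
    (hR' : IsQuasiSuborder R') : QuasiEmb (h.incl hR hR') :=
  fun a b => (h.isEmb_incl hR hR' a b).2

theorem map_incl_map_incl (W : PODilator.{u}) (h : IsRestriction R R') (hR : IsQuasiSuborder R)
    (hR' : IsQuasiSuborder R') (σ : W.obj hR.toPOrd) :
    W.map hR'.incl hR'.quasiEmb_incl (W.map (h.incl hR hR') (h.quasiEmb_incl hR hR') σ) =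
      W.map hR.incl hR.quasiEmb_incl σ :=
  (congrFun (W.map_comp (h.incl hR hR') hR'.incl (h.quasiEmb_incl hR hR') hR'.quasiEmb_incl)
    σ).symm

end IsRestriction

/-- The order that `W` assigns to the quasi suborder `R` of `Z`, transported to `W.obj Z` along the
injective (but not order preserving) map induced by the inclusion. -/
def PODilator.LiftRel (W : PODilator.{u}) {Z : POrd.{u}} (R : Z → Z → Prop) (s t : W.obj Z) :
    Prop :=
  ∃ (hR : IsQuasiSuborder R) (σ τ : W.obj hR.toPOrd),
    W.map hR.incl hR.quasiEmb_incl σ = s ∧ W.map hR.incl hR.quasiEmb_incl τ = t ∧ σ ≤ τ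

namespace PODilator.LiftRel

variable {W : PODilator.{u}} {Z : POrd.{u}} {R R' : Z → Z → Prop} {r s t : W.obj Z} {z : Z}

theorem map_incl_iff (hR : IsQuasiSuborder R) {σ τ : W.obj hR.toPOrd} :
    W.LiftRel R (W.map hR.incl hR.quasiEmb_incl σ) (W.map hR.incl hR.quasiEmb_incl τ) ↔
      σ ≤ τ := by
  have inj := (W.map_quasiEmb hR.incl hR.quasiEmb_incl).injective
  constructor
  · rintro ⟨_, σ', τ', hσ, hτ, hle⟩
    rwa [← inj hσ, ← inj hτ]
  · exact fun hle => ⟨hR, σ, τ, rfl, rfl, hle⟩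

theorem left (h : W.LiftRel R s t) : W.LiftRel R s s := by
  obtain ⟨hR, σ, τ, rfl, rfl, -⟩ := h
  exact (map_incl_iff hR).2 le_rfl

theorem right (h : W.LiftRel R s t) : W.LiftRel R t t := by
  obtain ⟨hR, σ, τ, rfl, rfl, -⟩ := h
  exact (map_incl_iff hR).2 le_rfl

theorem trans (hrs : W.LiftRel R r s) (hst : W.LiftRel R s t) : W.LiftRel R r t := by
  obtain ⟨hR, ρ, σ, rfl, rfl, hρσ⟩ := hrs
  obtain ⟨_, _, τ, _, rfl, _⟩ := id hst
  exact (map_incl_iff hR).2 (hρσ.trans ((map_incl_iff hR).1 hst))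

theorem antisymm (hst : W.LiftRel R s t) (hts : W.LiftRel R t s) : s = t := by
  obtain ⟨hR, σ, τ, rfl, rfl, hστ⟩ := hst
  rw [le_antisymm hστ ((map_incl_iff hR).1 hts)]

theorem of_le (hs : W.LiftRel R s s) (ht : W.LiftRel R t t) (hst : s ≤ t) : W.LiftRel R s t := by
  obtain ⟨hR, σ, -, rfl, -, -⟩ := hs
  obtain ⟨_, τ, _, rfl, _, _⟩ := ht
  exact (map_incl_iff hR).2 (W.map_quasiEmb _ _ _ _ hst)

theorem rel_self_of_mem_supp (h : W.LiftRel R s t) (hz : z ∈ W.supp s) : R z z := by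
  obtain ⟨hR, σ, -, rfl, -, -⟩ := h
  rw [W.supp_natural] at hz
  obtain ⟨y, -, rfl⟩ := hz
  exact y.2

theorem exists_mem_supp (hW : W.IsNormal) (h : W.LiftRel R s t) (hz : z ∈ W.supp s) :
    ∃ y ∈ W.supp t, R z y := by
  obtain ⟨hR, σ, τ, rfl, rfl, hστ⟩ := h
  rw [W.supp_natural] at hz ⊢
  obtain ⟨z, hz, rfl⟩ := hz
  obtain ⟨y, hy, hzy⟩ := hW _ _ _ hστ z hz
  exact ⟨_, Set.mem_image_of_mem _ hy, hzy⟩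

theorem mono (hRR' : IsRestriction R R') (hR' : IsQuasiSuborder R') (h : W.LiftRel R s t) :
    W.LiftRel R' s t := by
  obtain ⟨hR, σ, τ, rfl, rfl, hστ⟩ := h
  rw [← hRR'.map_incl_map_incl W hR hR', ← hRR'.map_incl_map_incl W hR hR', map_incl_iff]
  exact (W.map_emb _ _ (hRR'.isEmb_incl hR hR') _ _).1 hστ

theorem restrict (hRR' : IsRestriction R R') (hR : IsQuasiSuborder R) (h : W.LiftRel R' s t)
    (hs : ∀ z ∈ W.supp s, R z z) (ht : ∀ z ∈ W.supp t, R z z) : W.LiftRel R s t := by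
  obtain ⟨hR', σ, τ, rfl, rfl, hστ⟩ := h
  have emb := hRR'.isEmb_incl hR hR'
  have exists_preimage (σ : W.obj hR'.toPOrd)
      (hσ : ∀ z ∈ W.supp (W.map hR'.incl hR'.quasiEmb_incl σ), R z z) :
      σ ∈ Set.range (W.map (hRR'.incl hR hR') (hRR'.quasiEmb_incl hR hR')) := by
    rw [W.supp_natural] at hσ
    exact W.supp_cond _ _ emb σ fun y hy => ⟨⟨y.1, hσ _ ⟨y, hy, rfl⟩⟩, rfl⟩
  obtain ⟨σ, rfl⟩ := exists_preimage σ hs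
  obtain ⟨τ, rfl⟩ := exists_preimage τ ht
  rw [hRR'.map_incl_map_incl W, hRR'.map_incl_map_incl W, map_incl_iff]
  exact (W.map_emb _ _ emb _ _).2 hστ

end PODilator.LiftRel

/-! ### Increasing unions -/

section Union

variable {Z : POrd.{u}} {R : ℕ → Z → Z → Prop}

theorem IsRestriction.of_le (h : ∀ n, IsRestriction (R n) (R (n + 1))) {m n : ℕ} (hmn : m ≤ n) :
    IsRestriction (R m) (R n) :=
  Nat.le_induction (.refl _) (fun n _ ih => ih.trans (h n)) n hmn

theorem IsRestriction.exists_nat (h : ∀ n, IsRestriction (R n) (R (n + 1))) (n : ℕ) :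
    IsRestriction (R n) (fun a b => ∃ n, R n a b) :=
  ⟨fun hab => ⟨n, hab⟩, fun {_ _} ha hb ⟨m, hab⟩ =>
    (of_le h (le_max_left n m)).reflect ha hb ((of_le h (le_max_right n m)).mono hab)⟩

theorem IsQuasiSuborder.exists_nat (hR : ∀ n, IsQuasiSuborder (R n))
    (h : ∀ n, IsRestriction (R n) (R (n + 1))) :
    IsQuasiSuborder (fun a b => ∃ n, R n a b) where
  trans := fun {_ _ _} ⟨m, hab⟩ ⟨n, hbc⟩ =>
    ⟨max m n, (hR _).trans ((IsRestriction.of_le h (le_max_left m n)).mono hab)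
      ((IsRestriction.of_le h (le_max_right m n)).mono hbc)⟩
  antisymm := fun {_ _} ⟨m, hab⟩ ⟨n, hba⟩ =>
    (hR _).antisymm ((IsRestriction.of_le h (le_max_left m n)).mono hab)
      ((IsRestriction.of_le h (le_max_right m n)).mono hba)
  left := fun {_ _} ⟨n, hab⟩ => ⟨n, (hR n).left hab⟩
  right := fun {_ _} ⟨n, hab⟩ => ⟨n, (hR n).right hab⟩
  of_le := fun {_ _} ⟨m, ha⟩ ⟨n, hb⟩ hab =>
    ⟨max m n, (hR _).of_le ((IsRestriction.of_le h (le_max_left m n)).mono ha)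
      ((IsRestriction.of_le h (le_max_right m n)).mono hb) hab⟩

theorem exists_forall_mem_of_finite (h : ∀ n, IsRestriction (R n) (R (n + 1))) {S : Set Z}
    (hS : S.Finite) (hSR : ∀ z ∈ S, ∃ n, R n z z) : ∃ n, ∀ z ∈ S, R n z z := by
  choose! n hn using hSR
  obtain ⟨N, hN⟩ := (hS.image n).bddAbove
  exact ⟨N, fun z hz => (IsRestriction.of_le h (hN ⟨z, hz, rfl⟩)).mono (hn z hz)⟩

theorem PODilator.LiftRel.exists_of_exists_nat {W : PODilator.{u}}
    (hR : ∀ n, IsQuasiSuborder (R n)) (h : ∀ n, IsRestriction (R n) (R (n + 1)))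
    {s t : W.obj Z} (hst : W.LiftRel (fun a b => ∃ n, R n a b) s t) :
    ∃ n, W.LiftRel (R n) s t := by
  obtain ⟨n, hn⟩ := exists_forall_mem_of_finite h ((W.supp_finite s).union (W.supp_finite t))
    fun z hz => hz.elim hst.rel_self_of_mem_supp hst.right.rel_self_of_mem_supp
  exact ⟨n, hst.restrict (.exists_nat h n) (hR n) (fun z hz => hn z (.inl hz))
    fun z hz => hn z (.inr hz)⟩

end Union

section Reconstruction

variable {W : PODilator.{u}} {X Z : POrd.{u}} {ι : X → Z} {κ : W.obj Z → Z}
  {R R' : Z → Z → Prop} {a b c z : Z} {s t : W.obj Z}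

/-! ### Generated elements of a fixed point -/

/-- The elements of a Kruskal fixed point that correspond to well-founded terms built with `ι` and
`κ`. -/
inductive IsGenerated (ι : X → Z) (κ : W.obj Z → Z) : Z → Prop
  | iota (x : X) : IsGenerated ι κ (ι x)
  | kappa (s : W.obj Z) : (∀ z ∈ W.supp s, IsGenerated ι κ z) → IsGenerated ι κ (κ s)

theorem IsKruskalFP.iota_injective (hK : IsKruskalFP W X Z ι κ) : Function.Injective ι :=
  QuasiEmb.injective hK.iota_le

theorem IsKruskalFP.kappa_ne_iota (hK : IsKruskalFP W X Z ι κ) (s : W.obj Z) (x : X) :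
    κ s ≠ ι x :=
  fun h => hK.kappa_iota s x h.le

theorem IsKruskalFP.le_kappa_of_mem_supp (hK : IsKruskalFP W X Z ι κ)
    (hgen : IsGenerated ι κ z) (hz : z ∈ W.supp s) : z ≤ κ s := by
  cases hgen with
  | iota x => exact (hK.iota_kappa x s).2 ⟨_, hz, le_rfl⟩
  | kappa t => exact (hK.kappa_kappa t s).2 (.inr ⟨_, hz, le_rfl⟩)

theorem IsKruskalFP.not_kappa_le_of_mem_supp (hK : IsKruskalFP W X Z ι κ) (hW : W.IsNormal)
    (hgen : IsGenerated ι κ z) (hz : z ∈ W.supp s) : ¬ κ s ≤ z := by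
  induction hgen generalizing s with
  | iota x => exact hK.kappa_iota s x
  | kappa t hgen ih =>
    intro hst
    obtain hst | ⟨y, hy, hsy⟩ := (hK.kappa_kappa s t).1 hst
    · obtain ⟨y, hy, hty⟩ := hW Z s t hst _ hz
      exact ih y hy hy hty
    · exact ih y hy hy ((hK.le_kappa_of_mem_supp (.kappa t hgen) hz).trans hsy)

theorem IsKruskalFP.injOn_kappa (hK : IsKruskalFP W X Z ι κ) (hW : W.IsNormal) :
    Set.InjOn κ {s | ∀ z ∈ W.supp s, IsGenerated ι κ z} := by
  have le_of_eq {s t : W.obj Z} (ht : ∀ z ∈ W.supp t, IsGenerated ι κ z) (h : κ s = κ t) :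
      s ≤ t := by
    obtain hst | ⟨z, hz, hsz⟩ := (hK.kappa_kappa s t).1 h.le
    · exact hst
    · exact absurd (h ▸ hsz) (hK.not_kappa_le_of_mem_supp hW (ht z hz) hz)
  exact fun s hs t ht h => le_antisymm (le_of_eq ht h) (le_of_eq hs h.symm)

/-! ### Rebuilding the order of a fixed point -/

/-- One step in the reconstruction of the order on a Kruskal fixed point: the arguments of `κ` are
compared with respect to the order `R` obtained so far. -/
inductive KruskalStep (ι : X → Z) (κ : W.obj Z → Z) (R : Z → Z → Prop) : Z → Z → Prop
  | iota_iota {x y : X} : x ≤ y → KruskalStep ι κ R (ι x) (ι y)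
  | kappa_kappa {s t : W.obj Z} : W.LiftRel R s t → KruskalStep ι κ R (κ s) (κ t)
  | le_kappa {a z : Z} {t : W.obj Z} : W.LiftRel R t t → z ∈ W.supp t → KruskalStep ι κ R a z →
      KruskalStep ι κ R a (κ t)

/-- The invariant of the reconstruction: `R` is a quasi suborder of generated elements, and a
further step only adds new elements, without changing the comparisons between the old ones. -/
structure IsApproximation (ι : X → Z) (κ : W.obj Z → Z) (R : Z → Z → Prop) : Prop
    extends IsQuasiSuborder R where
  isGenerated : ∀ {a}, R a a → IsGenerated ι κ a
  isRestriction_step : IsRestriction R (KruskalStep ι κ R)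

namespace KruskalStep

theorem left (h : KruskalStep ι κ R a b) : KruskalStep ι κ R a a := by
  induction h with
  | iota_iota => exact iota_iota le_rfl
  | kappa_kappa hst => exact kappa_kappa hst.left
  | le_kappa _ _ _ ih => exact ih

theorem right (h : KruskalStep ι κ R a b) : KruskalStep ι κ R b b := by
  cases h with
  | iota_iota => exact iota_iota le_rfl
  | kappa_kappa hst => exact kappa_kappa hst.right
  | le_kappa ht => exact kappa_kappa ht

theorem exists_eq (h : KruskalStep ι κ R a b) :
    (∃ x, b = ι x) ∨ ∃ t, W.LiftRel R t t ∧ b = κ t := by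
  cases h with
  | iota_iota => exact .inl ⟨_, rfl⟩
  | kappa_kappa h => exact .inr ⟨_, h.right, rfl⟩
  | le_kappa h => exact .inr ⟨_, h, rfl⟩

theorem mono (hRR' : IsRestriction R R') (hR' : IsQuasiSuborder R') (h : KruskalStep ι κ R a b) :
    KruskalStep ι κ R' a b := by
  induction h with
  | iota_iota hxy => exact iota_iota hxy
  | kappa_kappa hst => exact kappa_kappa (hst.mono hRR' hR')
  | le_kappa ht hz _ ih => exact le_kappa (ht.mono hRR' hR') hz ih

theorem iota_right_iff (hK : IsKruskalFP W X Z ι κ) {y : X} :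
    KruskalStep ι κ R a (ι y) ↔ ∃ x ≤ y, a = ι x := by
  constructor
  · intro h
    generalize hb : ι y = b at h
    cases h with
    | iota_iota hxy => exact ⟨_, hK.iota_injective hb ▸ hxy, rfl⟩
    | kappa_kappa | le_kappa => exact absurd hb.symm (hK.kappa_ne_iota _ y)
  · rintro ⟨x, hxy, rfl⟩
    exact iota_iota hxy

theorem not_kappa_iota (hK : IsKruskalFP W X Z ι κ) {y : X} : ¬ KruskalStep ι κ R (κ s) (ι y) := by
  rw [iota_right_iff hK]
  rintro ⟨x, -, h⟩
  exact hK.kappa_ne_iota s x h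

end KruskalStep

theorem PODilator.LiftRel.isGenerated_of_mem_supp (hgen : ∀ {a}, R a a → IsGenerated ι κ a)
    (h : W.LiftRel R s t) : ∀ z ∈ W.supp s, IsGenerated ι κ z :=
  fun _ hz => hgen (h.rel_self_of_mem_supp hz)

namespace IsApproximation

theorem liftRel_self_of_step (hR : IsApproximation ι κ R) (hK : IsKruskalFP W X Z ι κ)
    (hW : W.IsNormal) (ht : ∀ z ∈ W.supp t, IsGenerated ι κ z)
    (h : KruskalStep ι κ R a (κ t)) : W.LiftRel R t t := by
  generalize hb : κ t = b at h
  cases h with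
  | iota_iota => exact absurd hb (hK.kappa_ne_iota t _)
  | kappa_kappa h =>
    rw [hK.injOn_kappa hW ht (h.right.isGenerated_of_mem_supp hR.isGenerated) hb]
    exact h.right
  | le_kappa h =>
    rw [hK.injOn_kappa hW ht (h.isGenerated_of_mem_supp hR.isGenerated) hb]
    exact h

theorem step_kappa_iff (hR : IsApproximation ι κ R) (hK : IsKruskalFP W X Z ι κ)
    (hW : W.IsNormal) (ht : W.LiftRel R t t) :
    KruskalStep ι κ R a (κ t) ↔
      (∃ s, W.LiftRel R s t ∧ a = κ s) ∨ ∃ z ∈ W.supp t, KruskalStep ι κ R a z := by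
  have gen {r : W.obj Z} (hr : W.LiftRel R r r) := hr.isGenerated_of_mem_supp hR.isGenerated
  constructor
  · intro h
    generalize hb : κ t = b at h
    cases h with
    | iota_iota => exact absurd hb (hK.kappa_ne_iota t _)
    | kappa_kappa hs =>
      exact .inl ⟨_, hK.injOn_kappa hW (gen ht) (gen hs.right) hb ▸ hs, rfl⟩
    | le_kappa hr hz h =>
      exact .inr ⟨_, hK.injOn_kappa hW (gen ht) (gen hr) hb ▸ hz, h⟩
  · rintro (⟨s, hst, rfl⟩ | ⟨z, hz, h⟩)
    · exact .kappa_kappa hst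
    · exact .le_kappa ht hz h

theorem step_iota_kappa_iff (hR : IsApproximation ι κ R) (hK : IsKruskalFP W X Z ι κ)
    (hW : W.IsNormal) {x : X} (ht : W.LiftRel R t t) :
    KruskalStep ι κ R (ι x) (κ t) ↔ ∃ z ∈ W.supp t, KruskalStep ι κ R (ι x) z := by
  rw [hR.step_kappa_iff hK hW ht, or_iff_right]
  rintro ⟨s, -, h⟩
  exact hK.kappa_ne_iota s x h.symm

theorem step_kappa_kappa_iff (hR : IsApproximation ι κ R) (hK : IsKruskalFP W X Z ι κ)
    (hW : W.IsNormal) (hs : W.LiftRel R s s) (ht : W.LiftRel R t t) :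
    KruskalStep ι κ R (κ s) (κ t) ↔
      W.LiftRel R s t ∨ ∃ z ∈ W.supp t, KruskalStep ι κ R (κ s) z := by
  rw [hR.step_kappa_iff hK hW ht]
  refine or_congr_left ⟨?_, fun h => ⟨s, h, rfl⟩⟩
  rintro ⟨r, hr, h⟩
  rwa [hK.injOn_kappa hW (hs.isGenerated_of_mem_supp hR.isGenerated)
    (hr.isGenerated_of_mem_supp hR.isGenerated) h]

theorem step_self_of_mem_supp (hR : IsApproximation ι κ R) (ht : W.LiftRel R t t)
    (hz : z ∈ W.supp t) : KruskalStep ι κ R z z :=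
  hR.isRestriction_step.mono (ht.rel_self_of_mem_supp hz)

theorem isGenerated_of_step (hR : IsApproximation ι κ R) (h : KruskalStep ι κ R a b) :
    IsGenerated ι κ b := by
  obtain ⟨x, rfl⟩ | ⟨t, ht, rfl⟩ := h.exists_eq
  · exact .iota x
  · exact .kappa t (ht.isGenerated_of_mem_supp hR.isGenerated)

theorem step_induction (hR : IsApproximation ι κ R) (hK : IsKruskalFP W X Z ι κ)
    (hW : W.IsNormal) {P : Z → Prop} (iota : ∀ x, P (ι x))
    (kappa : ∀ t, W.LiftRel R t t → (∀ z ∈ W.supp t, P z) → P (κ t))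
    (ha : KruskalStep ι κ R a a) : P a := by
  have hgen := hR.isGenerated_of_step ha
  induction hgen with
  | iota x => exact iota x
  | kappa t hgen ih =>
    have ht := hR.liftRel_self_of_step hK hW hgen ha
    exact kappa t ht fun z hz => ih z hz (hR.step_self_of_mem_supp ht hz)

theorem step_trans (hR : IsApproximation ι κ R) (hK : IsKruskalFP W X Z ι κ) (hW : W.IsNormal)
    (hab : KruskalStep ι κ R a b) (hbc : KruskalStep ι κ R b c) : KruskalStep ι κ R a c := by
  refine hR.step_induction hK hW (P := fun c => ∀ a b, KruskalStep ι κ R a b →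
    KruskalStep ι κ R b c → KruskalStep ι κ R a c) ?_ ?_ hbc.right a b hab hbc
  · intro z a b hab hbz
    obtain ⟨y, hyz, rfl⟩ := (KruskalStep.iota_right_iff hK).1 hbz
    obtain ⟨x, hxy, rfl⟩ := (KruskalStep.iota_right_iff hK).1 hab
    exact .iota_iota (hxy.trans hyz)
  · intro t ht ih a b hab hbt
    obtain ⟨s, hst, rfl⟩ | ⟨z, hz, hbz⟩ := (hR.step_kappa_iff hK hW ht).1 hbt
    · obtain ⟨r, hrs, rfl⟩ | ⟨y, hy, hay⟩ := (hR.step_kappa_iff hK hW hst.left).1 hab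
      · exact .kappa_kappa (hrs.trans hst)
      · obtain ⟨z, hz, hyz⟩ := hst.exists_mem_supp hW hy
        exact .le_kappa ht hz (ih z hz a y hay (hR.isRestriction_step.mono hyz))
    · exact .le_kappa ht hz (ih z hz a b hab hbz)

theorem not_step_kappa_of_mem_supp (hR : IsApproximation ι κ R) (hK : IsKruskalFP W X Z ι κ)
    (hW : W.IsNormal) (hs : W.LiftRel R s s) (hz : z ∈ W.supp s) :
    ¬ KruskalStep ι κ R (κ s) z := by
  refine hR.step_induction hK hW (P := fun z => ∀ s, W.LiftRel R s s → z ∈ W.supp s →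
    ¬ KruskalStep ι κ R (κ s) z) ?_ ?_ (hR.step_self_of_mem_supp hs hz) s hs hz
  · exact fun x s _ _ => KruskalStep.not_kappa_iota hK
  · intro t ht ih s hs hts hst
    obtain hst | ⟨y, hy, hsy⟩ := (hR.step_kappa_kappa_iff hK hW hs ht).1 hst
    · obtain ⟨y, hy, hty⟩ := hst.exists_mem_supp hW hts
      exact ih y hy t ht hy (hR.isRestriction_step.mono hty)
    · have hts : KruskalStep ι κ R (κ t) (κ s) :=
        .le_kappa hs hts (hR.step_self_of_mem_supp hs hts)
      exact ih y hy t ht hy (hR.step_trans hK hW hts hsy)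

theorem step_antisymm (hR : IsApproximation ι κ R) (hK : IsKruskalFP W X Z ι κ)
    (hW : W.IsNormal) (hab : KruskalStep ι κ R a b) (hba : KruskalStep ι κ R b a) : a = b := by
  cases hab with
  | iota_iota hxy =>
    obtain ⟨y, hyx, h⟩ := (KruskalStep.iota_right_iff hK).1 hba
    obtain rfl := hK.iota_injective h
    rw [le_antisymm hxy hyx]
  | kappa_kappa hst =>
    obtain hts | ⟨z, hz, htz⟩ := (hR.step_kappa_kappa_iff hK hW hst.right hst.left).1 hba
    · rw [hst.antisymm hts]
    · exact absurd (hR.step_trans hK hW (.kappa_kappa hst) htz)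
        (hR.not_step_kappa_of_mem_supp hK hW hst.left hz)
  | le_kappa ht hz haz =>
    exact absurd (hR.step_trans hK hW hba haz) (hR.not_step_kappa_of_mem_supp hK hW ht hz)

theorem step_of_le (hR : IsApproximation ι κ R) (hK : IsKruskalFP W X Z ι κ) (hW : W.IsNormal)
    (ha : KruskalStep ι κ R a a) (hb : KruskalStep ι κ R b b) (hab : a ≤ b) :
    KruskalStep ι κ R a b := by
  refine hR.step_induction hK hW (P := fun b => a ≤ b → KruskalStep ι κ R a b) ?_ ?_ hb hab
  · intro y hay
    obtain ⟨x, rfl⟩ | ⟨s, -, rfl⟩ := ha.exists_eq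
    · exact .iota_iota (hK.iota_le x y hay)
    · exact absurd hay (hK.kappa_iota s y)
  · intro t ht ih hat
    obtain ⟨x, rfl⟩ | ⟨s, hs, rfl⟩ := ha.exists_eq
    · obtain ⟨z, hz, hxz⟩ := (hK.iota_kappa x t).1 hat
      exact .le_kappa ht hz (ih z hz hxz)
    · obtain hst | ⟨z, hz, hsz⟩ := (hK.kappa_kappa s t).1 hat
      · exact .kappa_kappa (hs.of_le ht hst)
      · exact .le_kappa ht hz (ih z hz hsz)

theorem isQuasiSuborder_step (hR : IsApproximation ι κ R) (hK : IsKruskalFP W X Z ι κ)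
    (hW : W.IsNormal) : IsQuasiSuborder (KruskalStep ι κ R) where
  trans := hR.step_trans hK hW
  antisymm := hR.step_antisymm hK hW
  left := KruskalStep.left
  right := KruskalStep.right
  of_le := hR.step_of_le hK hW

theorem isRestriction_step_step (hR : IsApproximation ι κ R) (hK : IsKruskalFP W X Z ι κ)
    (hW : W.IsNormal) (hR' : IsQuasiSuborder R') (hgen' : ∀ {a}, R' a a → IsGenerated ι κ a)
    (hRR' : IsRestriction R R') : IsRestriction (KruskalStep ι κ R) (KruskalStep ι κ R') where
  mono := KruskalStep.mono hRR' hR'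
  reflect {a b} ha hb hab := by
    have liftRel_self {t : W.obj Z} (ht : W.LiftRel R' t t) (h : KruskalStep ι κ R (κ t) (κ t)) :
        W.LiftRel R t t :=
      hR.liftRel_self_of_step hK hW (ht.isGenerated_of_mem_supp hgen') h
    induction hab with
    | iota_iota hxy => exact .iota_iota hxy
    | kappa_kappa hst =>
      exact .kappa_kappa (hst.restrict hRR' hR.toIsQuasiSuborder
        (fun _ => (liftRel_self hst.left ha).rel_self_of_mem_supp)
        (fun _ => (liftRel_self hst.right hb).rel_self_of_mem_supp))
    | le_kappa ht hz _ ih =>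
      have ht := liftRel_self ht hb
      exact .le_kappa ht hz (ih ha (hR.step_self_of_mem_supp ht hz))

theorem step (hR : IsApproximation ι κ R) (hK : IsKruskalFP W X Z ι κ) (hW : W.IsNormal) :
    IsApproximation ι κ (KruskalStep ι κ R) where
  toIsQuasiSuborder := hR.isQuasiSuborder_step hK hW
  isGenerated := hR.isGenerated_of_step
  isRestriction_step := hR.isRestriction_step_step hK hW (hR.isQuasiSuborder_step hK hW)
    hR.isGenerated_of_step hR.isRestriction_step

end IsApproximation

/-- The `n`-th stage of the reconstruction, which compares the terms of height less than `n`. -/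
def kruskalStage (ι : X → Z) (κ : W.obj Z → Z) : ℕ → Z → Z → Prop
  | 0 => fun _ _ => False
  | n + 1 => KruskalStep ι κ (kruskalStage ι κ n)

/-- The rebuilt order: the union of all stages of the reconstruction. -/
def kruskalLimit (ι : X → Z) (κ : W.obj Z → Z) (a b : Z) : Prop :=
  ∃ n, kruskalStage ι κ n a b

theorem isApproximation_kruskalStage (hK : IsKruskalFP W X Z ι κ) (hW : W.IsNormal) (n : ℕ) :
    IsApproximation ι κ (kruskalStage ι κ n) := by
  induction n with
  | zero => exact ⟨⟨nofun, nofun, nofun, nofun, nofun⟩, nofun, nofun, nofun⟩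
  | succ n ih => exact ih.step hK hW

theorem isRestriction_kruskalStage_succ (hK : IsKruskalFP W X Z ι κ) (hW : W.IsNormal) (n : ℕ) :
    IsRestriction (kruskalStage ι κ n) (kruskalStage ι κ (n + 1)) :=
  (isApproximation_kruskalStage hK hW n).isRestriction_step

theorem isQuasiSuborder_kruskalLimit (hK : IsKruskalFP W X Z ι κ) (hW : W.IsNormal) :
    IsQuasiSuborder (kruskalLimit ι κ) :=
  .exists_nat (fun n => (isApproximation_kruskalStage hK hW n).toIsQuasiSuborder)
    (isRestriction_kruskalStage_succ hK hW)

theorem kruskalStep_kruskalLimit_iff (hK : IsKruskalFP W X Z ι κ) (hW : W.IsNormal) :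
    KruskalStep ι κ (kruskalLimit ι κ) a b ↔ kruskalLimit ι κ a b := by
  have restr := isRestriction_kruskalStage_succ hK hW
  have suborder (n : ℕ) := (isApproximation_kruskalStage hK hW n).toIsQuasiSuborder
  constructor
  · intro h
    have mono {m n : ℕ} (hmn : m ≤ n) := IsRestriction.of_le restr hmn
    induction h with
    | iota_iota hxy => exact ⟨1, .iota_iota hxy⟩
    | kappa_kappa hst =>
      obtain ⟨n, hst⟩ := PODilator.LiftRel.exists_of_exists_nat suborder restr hst
      exact ⟨n + 1, .kappa_kappa hst⟩
    | le_kappa ht hz _ ih =>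
      obtain ⟨m, ht⟩ := PODilator.LiftRel.exists_of_exists_nat suborder restr ht
      obtain ⟨n, haz⟩ := ih
      have haz := (mono ((le_max_right m n).trans (Nat.le_succ _))).mono haz
      exact ⟨max m n + 1, .le_kappa (ht.mono (mono (le_max_left m n)) (suborder _)) hz haz⟩
  · rintro ⟨n, hab⟩
    exact ((restr n).mono hab).mono (.exists_nat restr n) (isQuasiSuborder_kruskalLimit hK hW)

theorem isApproximation_kruskalLimit (hK : IsKruskalFP W X Z ι κ) (hW : W.IsNormal) :
    IsApproximation ι κ (kruskalLimit ι κ) where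
  toIsQuasiSuborder := isQuasiSuborder_kruskalLimit hK hW
  isGenerated := fun ⟨n, ha⟩ => (isApproximation_kruskalStage hK hW n).isGenerated ha
  isRestriction_step :=
    ⟨(kruskalStep_kruskalLimit_iff hK hW).2, fun _ _ => (kruskalStep_kruskalLimit_iff hK hW).1⟩

/-! ### Initial fixed points -/

theorem IsKruskalFP.exists_isKruskalFP_kruskalLimit (hK : IsKruskalFP W X Z ι κ)
    (hW : W.IsNormal) :
    let hR := isQuasiSuborder_kruskalLimit hK hW
    ∃ (ι' : X → hR.toPOrd) (κ' : W.obj hR.toPOrd → hR.toPOrd), IsKruskalFP W X hR.toPOrd ι' κ' ∧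
      hR.incl ∘ ι' = ι ∧ hR.incl ∘ κ' = κ ∘ W.map hR.incl hR.quasiEmb_incl := by
  intro hR
  have step_iff {a b : Z} : kruskalLimit ι κ a b ↔ _ := (kruskalStep_kruskalLimit_iff hK hW).symm
  have hL := isApproximation_kruskalLimit hK hW
  have lift (σ : W.obj hR.toPOrd) := (PODilator.LiftRel.map_incl_iff hR).2 (le_refl σ)
  let ι' (x : X) : hR.toPOrd := ⟨ι x, 1, .iota_iota le_rfl⟩
  let κ' (σ : W.obj hR.toPOrd) : hR.toPOrd :=
    ⟨κ (W.map hR.incl hR.quasiEmb_incl σ), step_iff.2 (.kappa_kappa (lift σ))⟩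
  refine ⟨ι', κ', ⟨?_, fun x y h => ?_, fun x τ => ?_, fun σ y h => ?_, fun σ τ => ?_⟩, rfl, rfl⟩
  · rw [← Set.disjoint_iff_inter_eq_empty, Set.disjoint_range_iff]
    exact fun x σ h => hK.kappa_ne_iota _ x (congrArg hR.incl h).symm
  · obtain ⟨z, hzy, h⟩ := (KruskalStep.iota_right_iff hK).1 (step_iff.1 h)
    rwa [hK.iota_injective h]
  · change kruskalLimit ι κ _ _ ↔ _
    rw [step_iff, hL.step_iota_kappa_iff hK hW (lift τ), W.supp_natural, Set.exists_mem_image]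
    simp only [← step_iff]
    rfl
  · exact KruskalStep.not_kappa_iota hK (step_iff.1 h)
  · change kruskalLimit ι κ _ _ ↔ _
    rw [step_iff, hL.step_kappa_kappa_iff hK hW (lift σ) (lift τ),
      PODilator.LiftRel.map_incl_iff, W.supp_natural, Set.exists_mem_image]
    simp only [← step_iff]
    rfl

theorem IsInitialKFP.kruskalLimit_iff_le (hI : IsInitialKFP W X Z ι κ) (hW : W.IsNormal) :
    kruskalLimit ι κ a b ↔ a ≤ b := by
  have hK := hI.1
  have hR := isQuasiSuborder_kruskalLimit hK hW
  obtain ⟨ι', κ', hK', hι', hκ'⟩ := hK.exists_isKruskalFP_kruskalLimit hW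
  obtain ⟨f, ⟨hf, hfι, hfκ⟩, -⟩ := hI.2 _ ι' κ' hK'
  have incl_comp : hR.incl ∘ f = id := by
    refine (hI.2 Z ι κ hK).unique ⟨hf.comp hR.quasiEmb_incl, ?_, ?_⟩ ⟨quasiEmb_id, rfl, ?_⟩
    · rw [Function.comp_assoc, hfι, hι']
    · rw [Function.comp_assoc, hfκ, ← Function.comp_assoc, hκ', W.map_comp f hR.incl hf]
      rfl
    · rw [W.map_id]
      rfl
  have val_eq (z : Z) : (f z).1 = z := congrFun incl_comp z
  rw [← val_eq a, ← val_eq b]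
  constructor
  · intro h
    rw [val_eq, val_eq]
    exact hf a b h
  · exact hR.quasiEmb_incl (f a) (f b)

theorem IsInitialKFP.kfpCondI (hI : IsInitialKFP W X Z ι κ) (hW : W.IsNormal) :
    KFPCondI W X Z ι κ where
  range_union := by
    refine Set.eq_univ_of_forall fun z => ?_
    have hz := (kruskalStep_kruskalLimit_iff hI.1 hW).2 ((hI.kruskalLimit_iff_le hW).2 (le_refl z))
    obtain ⟨x, rfl⟩ | ⟨s, -, rfl⟩ := hz.exists_eq
    · exact .inl ⟨x, rfl⟩
    · exact .inr ⟨s, rfl⟩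
  iota_mono x y hxy := (hI.kruskalLimit_iff_le hW).1 ⟨1, .iota_iota hxy⟩
  height := by
    classical
    have exists_stage (z : Z) : ∃ n, kruskalStage ι κ n z z :=
      (hI.kruskalLimit_iff_le hW).2 le_rfl
    have generated (z : Z) : IsGenerated ι κ z :=
      (isApproximation_kruskalLimit hI.1 hW).isGenerated (exists_stage z)
    refine ⟨fun z => Nat.find (exists_stage z), fun z s hz => (Nat.lt_find_iff _ _).2 ?_⟩
    rintro (_ | n) hn hs
    · exact hs
    · have hs := (isApproximation_kruskalStage hI.1 hW n).liftRel_self_of_step hI.1 hW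
        (fun z _ => generated z) hs
      exact n.not_succ_le_self
        (hn.trans (Nat.find_min' (exists_stage z) (hs.rel_self_of_mem_supp hz)))

theorem IsInitialKFP.isWpo (hI : IsInitialKFP W X Z ι κ) (hW : W.IsNormal) (hWPO : W.IsWPO)
    (hX : IsWpo X) : IsWpo Z :=
  hI.1.isWpo (hI.kfpCondI hW) hWPO hX

end Reconstruction

/-- The Kruskal derivative of a normal WPO-dilator is a WPO-dilator. -/
theorem kruskalDeriv_isWPO (W T : PODilator.{u})
    (ι : ∀ X : POrd.{u}, X → T.obj X)
    (κ : ∀ X : POrd.{u}, W.obj (T.obj X) → T.obj X)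
    (hWnormal : W.IsNormal) (hWwpo : W.IsWPO)
    (hD : IsKruskalDeriv W T ι κ) :
    T.IsWPO := by
  intro X hX
  exact (hD.initial X).isWpo hWnormal hWwpo hX
end

section
/- If η : V ⇒ W is a natural isomorphism between PO-dilators (V, supp^V) and (W, supp^W), then supp^W_X ∘ η_X = supp^V_X for every partial order X. -/
universe u

/-- Natural isomorphism of PO-dilators. -/
def IsNatIso (V W : PODilator.{u}) (η : ∀ X : POrd.{u}, V.obj X → W.obj X) : Prop :=
  (∀ X : POrd.{u}, Function.Bijective (η X) ∧ IsEmb (η X)) ∧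
  (∀ (X Y : POrd.{u}) (f : X → Y) (hf : QuasiEmb f), η Y ∘ V.map f hf = W.map f hf ∘ η X)

/-!
The support of `σ` is determined by the action of the functor on morphisms: it is the least set `b`
such that quasi embeddings which agree on `b` have the same value at `σ`. That property is
transferred in both directions by any natural family of injections.
-/

namespace PODilator

variable (W : PODilator.{u}) {X Y Z : POrd.{u}}

theorem map_map_eq_of_comp_eq {e : X → Y} {f g : Y → Z} (he : QuasiEmb e) (hf : QuasiEmb f)
    (hg : QuasiEmb g) (hcomp : f ∘ e = g ∘ e) (ρ : W.obj X) :
    W.map f hf (W.map e he ρ) = W.map g hg (W.map e he ρ) :=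
  calc W.map f hf (W.map e he ρ)
      = W.map (f ∘ e) (he.comp hf) ρ := (congrFun (W.map_comp e f he hf) ρ).symm
    _ = W.map (g ∘ e) (he.comp hg) ρ := by simp only [hcomp]
    _ = W.map g hg (W.map e he ρ) := congrFun (W.map_comp e g he hg) ρ

theorem map_eq_of_eqOn {f g : X → Y} (hf : QuasiEmb f) (hg : QuasiEmb g) {σ : W.obj X}
    (hfg : Set.EqOn f g (W.supp σ)) : W.map f hf σ = W.map g hg σ := by
  let incl : POrd.of (W.supp σ) → X := Subtype.val
  have hincl : IsEmb incl := fun _ _ => Iff.rfl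
  have hquasi : QuasiEmb incl := fun x y => (hincl x y).mpr
  obtain ⟨ρ, hρ⟩ := W.supp_cond incl hquasi hincl σ Subtype.range_val.ge
  have hcomp : f ∘ incl = g ∘ incl := funext fun x => hfg x.2
  rw [← hρ]
  exact W.map_map_eq_of_comp_eq hquasi hf hg hcomp ρ

theorem supp_subset_iff_forall_map_eq {σ : W.obj X} {b : Set X} :
    W.supp σ ⊆ b ↔ ∀ (Y : POrd.{u}) (f g : X → Y) (hf : QuasiEmb f) (hg : QuasiEmb g),
      Set.EqOn f g b → W.map f hf σ = W.map g hg σ := by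
  refine ⟨fun hσ _ _ _ hf hg hfg => W.map_eq_of_eqOn hf hg (hfg.mono hσ), fun hmap x hx => ?_⟩
  -- Two quasi embeddings into `X × Prop` that coincide exactly on `b`.
  let f : X → POrd.of (X × Prop) := fun y => (y, False)
  let g : X → POrd.of (X × Prop) := fun y => (y, y ∉ b)
  have hf : QuasiEmb f := fun _ _ h => h.1
  have hg : QuasiEmb g := fun _ _ h => h.1
  have hfg : Set.EqOn f g b := fun y hy => Prod.ext rfl (by simp [f, g, hy])
  have himage : f '' W.supp σ = g '' W.supp σ := by
    rw [← W.supp_natural f hf, ← W.supp_natural g hg, hmap _ f g hf hg hfg]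
  obtain ⟨y, -, hy⟩ : g x ∈ f '' W.supp σ := himage ▸ Set.mem_image_of_mem g hx
  exact not_not.mp fun hxb => (congrArg Prod.snd hy).mpr hxb

end PODilator

theorem natIso_supp_general (V W : PODilator.{u}) (η : ∀ X : POrd.{u}, V.obj X → W.obj X)
    (hinj : ∀ X : POrd.{u}, Function.Injective (η X))
    (hnat : ∀ (X Y : POrd.{u}) (f : X → Y) (hf : QuasiEmb f),
      η Y ∘ V.map f hf = W.map f hf ∘ η X)
    (X : POrd.{u}) (σ : V.obj X) :
    W.supp (η X σ) = V.supp σ := by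
  have map_eq_iff (Y : POrd.{u}) (f g : X → Y) (hf : QuasiEmb f) (hg : QuasiEmb g) :
      W.map f hf (η X σ) = W.map g hg (η X σ) ↔ V.map f hf σ = V.map g hg σ := by
    have hη (f : X → Y) (hf : QuasiEmb f) : W.map f hf (η X σ) = η Y (V.map f hf σ) :=
      (congrFun (hnat X Y f hf) σ).symm
    rw [hη, hη, (hinj Y).eq_iff]
  have supp_subset_iff (b : Set X) : W.supp (η X σ) ⊆ b ↔ V.supp σ ⊆ b := by
    simp only [PODilator.supp_subset_iff_forall_map_eq, map_eq_iff]
  exact eq_of_forall_ge_iff supp_subset_iff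

/-- Supports are automatically preserved by natural isomorphisms of PO-dilators. -/
theorem natIso_supp (V W : PODilator.{u}) (η : ∀ X : POrd.{u}, V.obj X → W.obj X)
    (hη : IsNatIso V W η) (X : POrd.{u}) (σ : V.obj X) :
    W.supp (η X σ) = V.supp σ :=
  natIso_supp_general V W η (fun Y => (hη.1 Y).1.injective) hη.2 X σ
end

section
/- If V and W are normal PO-dilators, then the composition V∘W is a normal PO-dilator; if moreover V and W are WPO-dilators, then V∘W is a WPO-dilator. -/
universe u

theorem PODilator.map_congr (V : PODilator.{u}) {X Y : POrd.{u}} {f g : X → Y}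
    (h : f = g) (hf : QuasiEmb f) (hg : QuasiEmb g) : V.map f hf = V.map g hg := by
  cases h; rfl

/-- The composition of two PO-dilators. -/
def PODilator.comp (V W : PODilator.{u}) : PODilator.{u} where
  obj X := V.obj (W.obj X)
  map f hf := V.map (W.map f hf) (W.map_quasiEmb f hf)
  supp {X} σ := ⋃ s ∈ V.supp σ, W.supp s
  map_quasiEmb f hf := V.map_quasiEmb _ _
  map_id X := by
    refine (V.map_congr (W.map_id X) _ quasiEmb_id).trans (V.map_id _)
  map_comp f g hf hg := by
    refine (V.map_congr (W.map_comp f g hf hg) _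
      ((W.map_quasiEmb f hf).comp (W.map_quasiEmb g hg))).trans ?_
    exact V.map_comp _ _ _ _
  map_emb f hf hemb := V.map_emb _ _ (W.map_emb f hf hemb)
  supp_finite σ := (V.supp_finite σ).biUnion fun s _ => W.supp_finite s
  supp_natural f hf σ := by
    show (⋃ s ∈ V.supp (V.map (W.map f hf) (W.map_quasiEmb f hf) σ), W.supp s)
      = f '' ⋃ s ∈ V.supp σ, W.supp s
    rw [V.supp_natural, Set.biUnion_image, Set.image_iUnion₂]
    exact Set.iUnion₂_congr fun s _ => W.supp_natural f hf s
  supp_cond f hf hemb σ hσ := by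
    apply V.supp_cond (W.map f hf) (W.map_quasiEmb f hf) (W.map_emb f hf hemb)
    intro s hs
    exact W.supp_cond f hf hemb s fun z hz => hσ (Set.mem_biUnion hs hz)


theorem LeFin.biUnion {ι κ X : Type*} [PartialOrder X] {a : Set ι} {b : Set κ}
    {f : ι → Set X} {g : κ → Set X} (h : ∀ s ∈ a, ∃ t ∈ b, LeFin (f s) (g t)) :
    LeFin (⋃ s ∈ a, f s) (⋃ t ∈ b, g t) := by
  intro x hx
  obtain ⟨s, hs, hxs⟩ := Set.mem_iUnion₂.1 hx
  obtain ⟨t, ht, hst⟩ := h s hs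
  obtain ⟨y, hy, hxy⟩ := hst x hxs
  exact ⟨y, Set.mem_biUnion ht hy, hxy⟩

namespace PODilator

variable {V W : PODilator.{u}}

theorem IsNormal.comp (hV : V.IsNormal) (hW : W.IsNormal) : (V.comp W).IsNormal := by
  intro X σ τ hστ
  refine LeFin.biUnion fun s hs => ?_
  obtain ⟨t, ht, hst⟩ := hV (W.obj X) σ τ hστ s hs
  exact ⟨t, ht, hW X s t hst⟩

theorem IsWPO.comp (hV : V.IsWPO) (hW : W.IsWPO) : (V.comp W).IsWPO :=
  fun X hX => hV (W.obj X) (hW X hX)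

end PODilator

/-- The composition of normal PO-dilators is normal, and the composition of
WPO-dilators is a WPO-dilator. -/
theorem comp_isNormal_isWPO (V W : PODilator.{u}) (hV : V.IsNormal) (hW : W.IsNormal) :
    (V.comp W).IsNormal ∧ (V.IsWPO → W.IsWPO → (V.comp W).IsWPO) :=
  ⟨hV.comp hW, PODilator.IsWPO.comp⟩
end

section
/- For every n ∈ ℕ and every partial order X, the relation ≤_{T_n(X)} is a partial order on T_n(X), and s ≤_{T_n(X)} t implies h^n_X(s) ≤ h^n_X(t) for all s, t ∈ T_n(X). -/
universe u

/-- Terms for labelled trees: leaves carry labels from `X`, inner nodes carry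
natural number labels and a (multi)set of immediate subtrees, represented as a list. -/
inductive TTerm (X : Type u) : Type u
  | leaf : X → TTerm X
  | node : ℕ → List (TTerm X) → TTerm X

namespace TTerm

/-- All node labels are `< n`. -/
inductive Bdd (n : ℕ) {X : Type u} : TTerm X → Prop
  | leaf (x : X) : Bdd n (leaf x)
  | node {i : ℕ} {l : List (TTerm X)} : i < n → (∀ t ∈ l, Bdd n t) → Bdd n (node i l)

/-- The term is a leaf or has root label `0`. -/
def IsMinus {X : Type u} : TTerm X → Prop
  | leaf _ => True
  | node i _ => i = 0

/-- The recursively defined gap order `≤_{T_n(X)}`, relative to a relation `r`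
on the leaf labels.  Lists of subtrees are compared as multisets: via an
injection that relates corresponding entries. -/
inductive TLE {X : Type u} (r : X → X → Prop) : TTerm X → TTerm X → Prop
  | leaf {x y : X} : r x y → TLE r (leaf x) (leaf y)
  | leaf_sub {x : X} {j : ℕ} {l : List (TTerm X)} {t : TTerm X} :
      t ∈ l → TLE r (leaf x) t → TLE r (leaf x) (node j l)
  | node {i : ℕ} {l l' : List (TTerm X)} (g : Fin l.length → Fin l'.length) :
      Function.Injective g → (∀ k, TLE r (l.get k) (l'.get (g k))) →
      TLE r (node i l) (node i l')
  | node_sub {i j : ℕ} {σ : List (TTerm X)} {l : List (TTerm X)} {t : TTerm X} :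
      i ≤ j → t ∈ l → TLE r (node i σ) t → TLE r (node i σ) (node j l)

/-- Equality of terms as labelled trees with multisets of subtrees, relative to a
relation `e` identifying leaf labels. -/
inductive TEquiv {X : Type u} (e : X → X → Prop) : TTerm X → TTerm X → Prop
  | leaf {x y : X} : e x y → TEquiv e (leaf x) (leaf y)
  | node {i : ℕ} {l l' : List (TTerm X)} (g : Fin l.length → Fin l'.length) :
      Function.Bijective g → (∀ k, TEquiv e (l.get k) (l'.get (g k))) →
      TEquiv e (node i l) (node i l')

/-- The height of a term. -/
def height {X : Type u} : TTerm X → ℕ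
  | leaf _ => 0
  | node _ l => (l.attach.map (fun t => height t.1)).foldr (fun a b => max (a + 1) b) 0
decreasing_by
  have := List.sizeOf_lt_of_mem t.2
  simp only [TTerm.node.sizeOf_spec]
  omega

/-- The support of a term: the set of its leaf labels. -/
def suppT {X : Type u} : TTerm X → Set X
  | leaf x => {x}
  | node _ l => (l.attach.map (fun t => suppT t.1)).foldr (· ∪ ·) ∅
decreasing_by
  have := List.sizeOf_lt_of_mem t.2
  simp only [TTerm.node.sizeOf_spec]
  omega

/-- The action of `T_n` on maps. -/
def tmap {X Y : Type u} (f : X → Y) : TTerm X → TTerm Y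
  | leaf x => leaf (f x)
  | node i l => node i (l.attach.map (fun t => tmap f t.1))
decreasing_by
  have := List.sizeOf_lt_of_mem t.2
  simp only [TTerm.node.sizeOf_spec]
  omega

end TTerm

open TTerm

/-- `T_n(X)`: tree terms with labels bounded by `n` (lists representing multisets). -/
def Tn (n : ℕ) (X : Type u) : Type u := {t : TTerm X // TTerm.Bdd n t}

/-- `T_n(X)` with terms that represent the same labelled tree (with multisets of
immediate subtrees) identified. -/
def TnQ (n : ℕ) (X : Type u) : Type u :=
  Quot (fun a b : Tn n X => TEquiv Eq a.1 b.1)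

/-- The gap order on `T_n(X)`. -/
def TnQLE (n : ℕ) (X : Type u) [PartialOrder X] : TnQ n X → TnQ n X → Prop :=
  fun a b => ∃ s t : Tn n X, a = Quot.mk _ s ∧ b = Quot.mk _ t ∧ TLE (· ≤ ·) s.1 t.1

/-!
The relation `TLE r` on raw terms is a preorder whenever `r` is one. If `s ≤ t` holds by descending
into a proper subterm of `t`, then `s` has height smaller than `t`, so `t ≤ s` is impossible. If two
nodes are below each other, their lists of immediate subterms are therefore compared by injections
`g` and `g'` in opposite directions. Then `g` is bijective, and since some iterate of `g' ∘ g` fixes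
a given index `k`, the entries at `k` and `g k` are again below each other, which makes induction
possible. So the terms below each other are exactly those that `TEquiv` identifies, and the quotient
is the antisymmetrization of the preorder.
-/

theorem rel_iterate_of_rel_apply {α : Type*} {R : α → α → Prop} [IsPreorder α R] {f : α → α}
    (hf : ∀ a, R a (f a)) (m : ℕ) (a : α) : R a (f^[m] a) := by
  induction m generalizing a with
  | zero => exact refl_of R a
  | succ m ih => exact trans_of R (hf a) (ih (f a))

theorem apply_rel_self_of_injective {α : Type*} [Finite α] {R : α → α → Prop} [IsPreorder α R]
    {f : α → α} (hinj : f.Injective) (hf : ∀ a, R a (f a)) (a : α) : R (f a) a := by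
  obtain ⟨m, hm, hperiod⟩ := hinj.mem_periodicPts a
  obtain ⟨m, rfl⟩ := Nat.exists_eq_succ_of_ne_zero hm.ne'
  have hiter : f^[m] (f a) = a := hperiod
  simpa only [hiter] using rel_iterate_of_rel_apply hf m (f a)

theorem rel_of_injective_of_injective {α β γ : Type*} [Finite α] {R : γ → γ → Prop}
    [IsPreorder γ R] {v : α → γ} {w : β → γ} {g : α → β} {g' : β → α}
    (hg : g.Injective) (hg' : g'.Injective) (hvw : ∀ a, R (v a) (w (g a)))
    (hwv : ∀ b, R (w b) (v (g' b))) (a : α) : R (w (g a)) (v a) :=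
  have hreturn : R (v (g' (g a))) (v a) :=
    apply_rel_self_of_injective (R := v ⁻¹'o R) (hg'.comp hg)
      (fun a => trans_of R (hvw a) (hwv (g a))) a
  trans_of R (hwv (g a)) hreturn

namespace TTerm

variable {X : Type u} {r : X → X → Prop} {s t u : TTerm X} {i j : ℕ} {l l' : List (TTerm X)}

theorem height_node_le_iff {h : ℕ} : height (node i l) ≤ h ↔ ∀ t ∈ l, height t < h := by
  rw [height, List.attach_map_val (f := height)]
  induction l with
  | nil => simp
  | cons a l ih =>
    simp only [List.map_cons, List.foldr_cons, max_le_iff, ih, List.forall_mem_cons,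
      Nat.add_one_le_iff]

theorem height_lt_height_node (ht : t ∈ l) : height t < height (node i l) :=
  height_node_le_iff.1 le_rfl t ht

theorem TLE.height_le (h : TLE r s t) : height s ≤ height t := by
  induction h with
  | leaf | leaf_sub => simp [height]
  | node g _ _ ih =>
    refine height_node_le_iff.2 fun t ht => ?_
    obtain ⟨k, rfl⟩ := List.get_of_mem ht
    exact (ih k).trans_lt (height_lt_height_node (List.get_mem _ _))
  | node_sub _ ht _ ih => exact ih.trans (height_lt_height_node ht).le

theorem not_node_tle_of_mem (ht : t ∈ l) : ¬ TLE r (node i l) t :=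
  fun h => h.height_le.not_gt (height_lt_height_node ht)

protected theorem TLE.refl [Std.Refl r] : ∀ t : TTerm X, TLE r t t
  | .leaf x => .leaf (refl_of r x)
  | .node _ l => .node id Function.injective_id fun k => TLE.refl (l.get k)
termination_by t => height t
decreasing_by exact height_lt_height_node (List.get_mem l k)

theorem TLE.label_le (h : TLE r (.node i l) (.node j l')) : i ≤ j := by
  cases h with
  | node => exact le_rfl
  | node_sub hij => exact hij

protected theorem TLE.trans [IsTrans X r] (hst : TLE r s t) (htu : TLE r t u) : TLE r s u := by
  induction htu generalizing s with
  | leaf hyz =>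
    cases hst with
    | leaf hxy => exact .leaf (trans_of r hxy hyz)
  | leaf_sub hmem _ ih =>
    cases hst with
    | leaf hxy => exact .leaf_sub hmem (ih (.leaf hxy))
  | node g hg _ ih =>
    cases hst with
    | leaf_sub hmem hs =>
      obtain ⟨k, rfl⟩ := List.get_of_mem hmem
      exact .leaf_sub (List.get_mem _ _) (ih k hs)
    | node f hf hs => exact .node (g ∘ f) (hg.comp hf) fun k => ih _ (hs k)
    | node_sub hij hmem hs =>
      obtain ⟨k, rfl⟩ := List.get_of_mem hmem
      exact .node_sub hij (List.get_mem _ _) (ih k hs)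
  | node_sub hjk hmem _ ih =>
    cases s with
    | leaf x => exact .leaf_sub hmem (ih hst)
    | node i σ => exact .node_sub (hst.label_le.trans hjk) hmem (ih hst)

instance [IsPreorder X r] : IsPreorder (TTerm X) (TLE r) where
  refl := TLE.refl
  trans _ _ _ := TLE.trans

theorem TEquiv.antisymmRel (h : TEquiv (AntisymmRel r) s t) : AntisymmRel (TLE r) s t := by
  induction h with
  | leaf hxy => exact ⟨.leaf hxy.1, .leaf hxy.2⟩
  | @node i l l' g hg _ ih =>
    obtain ⟨g', -, hright⟩ := Function.bijective_iff_has_inverse.1 hg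
    refine ⟨.node g hg.injective fun k => (ih k).1, .node g' hright.injective fun k => ?_⟩
    simpa only [hright k] using (ih (g' k)).2

theorem TLE.tequiv [IsPreorder X r] (hst : TLE r s t) (hts : TLE r t s) :
    TEquiv (AntisymmRel r) s t := by
  induction hst with
  | leaf hxy =>
    cases hts with
    | leaf hyx => exact .leaf ⟨hxy, hyx⟩
  | leaf_sub => cases hts
  | node_sub _ hmem hst _ => exact absurd (hts.trans hst) (not_node_tle_of_mem hmem)
  | node g hg h ih =>
    cases hts with
    | node_sub _ hmem hts => exact absurd ((TLE.node g hg h).trans hts) (not_node_tle_of_mem hmem)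
    | node g' hg' h' =>
      have hbij : g.Bijective :=
        hg.bijective_of_nat_card_le (Nat.card_le_card_of_injective g' hg')
      exact .node g hbij fun k => ih k (rel_of_injective_of_injective hg hg' h h' k)

theorem antisymmRel_tle_iff [IsPreorder X r] :
    AntisymmRel (TLE r) s t ↔ TEquiv (AntisymmRel r) s t :=
  ⟨fun h => h.1.tequiv h.2, TEquiv.antisymmRel⟩

theorem antisymmRel_tle_le_iff [PartialOrder X] :
    AntisymmRel (TLE (· ≤ ·)) s t ↔ TEquiv Eq s t := by
  have hEq : AntisymmRel (α := X) (· ≤ ·) = Eq := by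
    ext x y
    exact antisymmRel_iff_eq
  rw [antisymmRel_tle_iff, hEq]

end TTerm

section Quotient

variable {n : ℕ} {X : Type u} [PartialOrder X] {s t : Tn n X}

theorem tnQ_mk_eq_mk_iff :
    (Quot.mk _ s : TnQ n X) = Quot.mk _ t ↔ AntisymmRel (TLE (· ≤ ·)) s.1 t.1 := by
  have hequiv : Equivalence fun a b : Tn n X => AntisymmRel (TLE (· ≤ ·)) a.1 b.1 :=
    (AntisymmRel.setoid (TTerm X) (TLE (· ≤ ·))).iseqv.comap Subtype.val
  simp only [antisymmRel_tle_le_iff] at hequiv ⊢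
  rw [Quot.eq, hequiv.eqvGen_iff]

theorem tnQLE_mk_mk_iff :
    TnQLE n X (Quot.mk _ s) (Quot.mk _ t) ↔ TLE (· ≤ ·) s.1 t.1 := by
  refine ⟨?_, fun h => ⟨s, t, rfl, rfl, h⟩⟩
  rintro ⟨s', t', hs, ht, h⟩
  exact ((tnQ_mk_eq_mk_iff.1 hs).1.trans h).trans (tnQ_mk_eq_mk_iff.1 ht).2

end Quotient

/-- The relation `≤_{T_n(X)}` is a partial order on `T_n(X)`, and `s ≤ t` implies
`height s ≤ height t`. -/
theorem tn_partialOrder_and_height (n : ℕ) (X : Type u) [PartialOrder X] :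
    IsPartialOrder (TnQ n X) (TnQLE n X) ∧
    (∀ s t : TTerm X, TTerm.Bdd n s → TTerm.Bdd n t →
      TLE (· ≤ ·) s t → TTerm.height s ≤ TTerm.height t) := by
  refine ⟨{ refl := ?_, trans := ?_, antisymm := ?_ }, fun s t _ _ h => h.height_le⟩
  · rintro ⟨s⟩
    exact tnQLE_mk_mk_iff.2 (TLE.refl s.1)
  · rintro ⟨s⟩ ⟨t⟩ ⟨u⟩ hst htu
    exact tnQLE_mk_mk_iff.2 ((tnQLE_mk_mk_iff.1 hst).trans (tnQLE_mk_mk_iff.1 htu))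
  · rintro ⟨s⟩ ⟨t⟩ hst hts
    exact tnQ_mk_eq_mk_iff.2 ⟨tnQLE_mk_mk_iff.1 hst, tnQLE_mk_mk_iff.1 hts⟩
end
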